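/- arXiv:1608.00857 — 2 statements merged into one kernel-verified Lean document; each statement's English description precedes it below -/
import Mathlib

section
/- For every integer m ≥ 1 there are constants D₁, D₂ > 0 depending only on m such that for every nonempty closed set Z ⊊ ℝ^m there exists an m-dimensional simplicial complex Σ in ℝ^m with Σ^{(m)} = ℝ^m ∖ Z and such that every m-simplex σ ∈ Σ satisfies: diam(σ) ≤ dist(σ, Z) ≤ 12√m · diam(σ), and D₁ < diam(σ)/B_σ ≤ diam(σ)/β_σ < D₂. -/
open MeasureTheory Metric Set
noncomputable section

/-- `Euc d` is `ℝ^d` with the Euclidean metric. -/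
abbrev Euc (d : ℕ) := EuclideanSpace ℝ (Fin d)

/-- The `k`-skeleton (as a subset of `ℝ^m`) of a simplicial complex: the union of all of
its `k`-simplices (faces with `k+1` vertices). -/
def skel (m : ℕ) (K : Geometry.SimplicialComplex ℝ (Euc m)) (k : ℕ) : Set (Euc m) :=
  ⋃ s ∈ {s ∈ K.faces | s.card = k + 1}, convexHull ℝ (s : Set (Euc m))

/-- The diameter of the simplex spanned by the vertex set `s`. -/
def simpDiam (m : ℕ) (s : Finset (Euc m)) : ℝ :=
  Metric.diam (convexHull ℝ (s : Set (Euc m)))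

/-- The distance between two subsets of `ℝ^m`. -/
def setDist (m : ℕ) (A B : Set (Euc m)) : ℝ :=
  sInf (Set.image2 dist A B)

/-- `β(ω)` for the simplex with vertex set `ω`: the minimum distance from the barycenter
of `ω` to an affine plane spanned by a face of codimension one. -/
def faceBetaMin (m : ℕ) (ω : Finset (Euc m)) : ℝ :=
  sInf { d | ∃ t ⊆ ω, t.card = ω.card - 1 ∧
    d = Metric.infDist (ω.centroid ℝ id)
          ((affineSpan ℝ (t : Set (Euc m)) : AffineSubspace ℝ (Euc m)) : Set (Euc m)) }

/-- `B(ω)` for the simplex with vertex set `ω`: the maximum distance from the barycenter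
of `ω` to an affine plane spanned by a face of codimension one. -/
def faceBetaMax (m : ℕ) (ω : Finset (Euc m)) : ℝ :=
  sSup { d | ∃ t ⊆ ω, t.card = ω.card - 1 ∧
    d = Metric.infDist (ω.centroid ℝ id)
          ((affineSpan ℝ (t : Set (Euc m)) : AffineSubspace ℝ (Euc m)) : Set (Euc m)) }

/-- `β_σ`: the minimum of `β(ω)` over all faces `ω` of `σ` of dimension `≥ 1`. -/
def betaLow (m : ℕ) (σ : Finset (Euc m)) : ℝ :=
  sInf { b | ∃ ω ⊆ σ, 2 ≤ ω.card ∧ b = faceBetaMin m ω }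

/-- `B_σ`: the maximum of `B(ω)` over all faces `ω` of `σ` of dimension `≥ 1`. -/
def betaHigh (m : ℕ) (σ : Finset (Euc m)) : ℝ :=
  sSup { b | ∃ ω ⊆ σ, 2 ≤ ω.card ∧ b = faceBetaMax m ω }

/-- The conclusions of the Whitney triangulation lemma for the closed set `Z ⊂ ℝ^m`:
`K` is an `m`-dimensional simplicial complex whose `m`-skeleton is `ℝ^m ∖ Z`, all of
whose `m`-simplices `σ` satisfy `diam σ ≤ dist(σ,Z) ≤ 12√m diam σ` and
`D₁ < diam σ / B_σ ≤ diam σ / β_σ < D₂`. -/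
def WhitneyConclusions (m : ℕ) (D₁ D₂ : ℝ) (Z : Set (Euc m))
    (K : Geometry.SimplicialComplex ℝ (Euc m)) : Prop :=
  (∀ s ∈ K.faces, s.card ≤ m + 1) ∧
  skel m K m = Zᶜ ∧
  ∀ σ ∈ K.faces, σ.card = m + 1 →
    simpDiam m σ ≤ setDist m (convexHull ℝ (σ : Set (Euc m))) Z ∧
    setDist m (convexHull ℝ (σ : Set (Euc m))) Z ≤ 12 * Real.sqrt m * simpDiam m σ ∧
    D₁ < simpDiam m σ / betaHigh m σ ∧
    simpDiam m σ / betaHigh m σ ≤ simpDiam m σ / betaLow m σ ∧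
    simpDiam m σ / betaLow m σ < D₂

/-!
Away from `Z`, subdivide space into dyadic cells, at each point `x` using the coarsest grid for
which the whole star of `x` keeps one cube diameter away from `Z`. Because stars are tested
rather than cubes, this level can only increase from a cell to its faces, and by at most one, so
the cells of varying size still form a cell complex. Its barycentric subdivision is the desired
simplicial complex. Each simplex of it is a flag of cells inside one cell `C`, and after
rescaling `C` to unit size its vertices lie in `{-2, …, 2}ᵐ / 4`, so there are only finitely
many shapes of simplices.
-/

namespace WhitneyTriangulation

section OpenSimplex

variable {𝕜 E : Type*} [Field 𝕜] [LinearOrder 𝕜] [IsStrictOrderedRing 𝕜]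
  [AddCommGroup E] [Module 𝕜 E]

variable (𝕜) in
/-- The open simplex spanned by `s`: the convex combinations of `s` whose weights are all positive.
It is the relative interior of `convexHull 𝕜 s`, without `s` having to be affinely independent. -/
def openSimplex (s : Finset E) : Set E :=
  {x | ∃ w : E → 𝕜, (∀ v ∈ s, 0 < w v) ∧ ∑ v ∈ s, w v = 1 ∧ ∑ v ∈ s, w v • v = x}

lemma nonempty_of_mem_openSimplex {s : Finset E} {x : E} (hx : x ∈ openSimplex 𝕜 s) :
    s.Nonempty := by
  obtain ⟨w, -, hw, -⟩ := hx
  exact Finset.nonempty_of_sum_ne_zero (hw ▸ one_ne_zero)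

lemma inv_sum_smul_sum_mem_openSimplex {s : Finset E} {w : E → 𝕜} (hs : s.Nonempty)
    (hw : ∀ v ∈ s, 0 < w v) : (∑ v ∈ s, w v)⁻¹ • ∑ v ∈ s, w v • v ∈ openSimplex 𝕜 s := by
  have hpos : 0 < ∑ v ∈ s, w v := Finset.sum_pos hw hs
  refine ⟨fun v ↦ (∑ v ∈ s, w v)⁻¹ * w v, fun v hv ↦ mul_pos (inv_pos.2 hpos) (hw v hv), ?_, ?_⟩
  · rw [← Finset.mul_sum, inv_mul_cancel₀ hpos.ne']
  · simp only [Finset.smul_sum, smul_smul]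

lemma sum_filter_pos_eq_sum_filter_neg {α R M : Type*} [Zero R] [LinearOrder R] [AddCommGroup M]
    {s : Finset α} {w : α → R} {f : α → M} (hf : ∀ v, w v = 0 → f v = 0)
    (hsum : ∑ v ∈ s, f v = 0) :
    ∑ v ∈ s with 0 < w v, f v = ∑ v ∈ s with w v < 0, -f v := by
  have hneg : ∑ v ∈ s with ¬ 0 < w v, f v = ∑ v ∈ s with w v < 0, f v :=
    (Finset.sum_subset (fun v hv ↦ by grind) fun v hv hv' ↦ hf v (by grind)).symm
  rw [Finset.sum_neg_distrib, eq_neg_iff_add_eq_zero, ← hneg,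
    Finset.sum_filter_add_sum_filter_not, hsum]

/-- As in Radon's theorem, moving the negative terms of an affine relation to the other side
exhibits a common point. -/
lemma exists_mem_openSimplex_inter_of_sum_smul_eq_zero {s : Finset E} {w : E → 𝕜}
    (hw : ∑ v ∈ s, w v = 0) (hwv : ∑ v ∈ s, w v • v = 0) (hne : ∃ v ∈ s, w v ≠ 0) :
    (openSimplex 𝕜 {v ∈ s | 0 < w v} ∩ openSimplex 𝕜 {v ∈ s | w v < 0}).Nonempty := by
  have hsum := sum_filter_pos_eq_sum_filter_neg (fun _ ↦ id) hw
  have hsmul := sum_filter_pos_eq_sum_filter_neg (f := fun v ↦ w v • v) (w := w)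
    (fun v hv ↦ by rw [hv, zero_smul]) hwv
  obtain ⟨v, hv, hpos⟩ : ∃ v ∈ s, 0 < w v :=
    Finset.exists_pos_of_sum_zero_of_exists_nonzero w hw hne
  obtain ⟨v', hv', hneg⟩ : ∃ v ∈ s, 0 < -w v :=
    Finset.exists_pos_of_sum_zero_of_exists_nonzero (fun v ↦ -w v)
      (by rw [Finset.sum_neg_distrib, hw, neg_zero]) (by simpa using hne)
  have hx := inv_sum_smul_sum_mem_openSimplex (s := {v ∈ s | 0 < w v}) (w := w)
    ⟨v, by simp [hv, hpos]⟩ (by simp)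
  refine ⟨_, hx, ?_⟩
  rw [hsum, hsmul]
  simpa only [neg_smul] using inv_sum_smul_sum_mem_openSimplex (s := {v ∈ s | w v < 0})
    (w := fun v ↦ -w v) ⟨v', by simpa [hv'] using hneg⟩ (by simp)

lemma exists_mem_openSegment_of_mem_openSimplex {s : Finset E} {x v : E}
    (hx : x ∈ openSimplex 𝕜 s) (hv : v ∈ s) :
    ∃ y ∈ convexHull 𝕜 (s : Set E), x ∈ openSegment 𝕜 v y := by
  classical
  obtain ⟨w, hw, hw₁, rfl⟩ := hx
  have hlt : w v / 2 < 1 := by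
    linarith [hw v hv, Finset.single_le_sum (fun u hu ↦ (hw u hu).le) hv]
  have hpos : 0 < 1 - w v / 2 := sub_pos.2 hlt
  refine ⟨∑ u ∈ s, ((1 - w v / 2)⁻¹ * (w u - if u = v then w v / 2 else 0)) • u,
    Finset.mem_convexHull'.2 ⟨_, fun u hu ↦ mul_nonneg (inv_pos.2 hpos).le ?_, ?_, rfl⟩,
    w v / 2, 1 - w v / 2, half_pos (hw v hv), hpos, add_sub_cancel _ _, ?_⟩
  · split_ifs with h
    · rw [h]; linarith [hw v hv]
    · rw [sub_zero]; exact (hw u hu).le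
  · rw [← Finset.mul_sum, Finset.sum_sub_distrib, hw₁, Finset.sum_ite_eq' s v, if_pos hv,
      inv_mul_cancel₀ hpos.ne']
  · simp only [mul_smul, ← Finset.smul_sum, smul_inv_smul₀ hpos.ne', sub_smul,
      Finset.sum_sub_distrib, ite_smul, zero_smul, Finset.sum_ite_eq' s v, if_pos hv,
      add_sub_cancel]

variable {F : Set (Finset E)}

lemma eq_zero_of_sum_smul_eq_zero (hF : IsRelLowerSet F Finset.Nonempty)
    (hdisj : ∀ s ∈ F, ∀ t ∈ F, Disjoint s t → Disjoint (openSimplex 𝕜 s) (openSimplex 𝕜 t))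
    {s t u : Finset E} (hs : s ∈ F) (ht : t ∈ F) {w : E → 𝕜}
    (hpos : ∀ v ∈ u, 0 < w v → v ∈ s) (hneg : ∀ v ∈ u, w v < 0 → v ∈ t)
    (hw : ∑ v ∈ u, w v = 0) (hwv : ∑ v ∈ u, w v • v = 0) : ∀ v ∈ u, w v = 0 := by
  by_contra! hne
  obtain ⟨x, hx, hx'⟩ := exists_mem_openSimplex_inter_of_sum_smul_eq_zero hw hwv hne
  refine (hdisj _ (hF.mem_of_le hs ?_ (nonempty_of_mem_openSimplex hx))
    _ (hF.mem_of_le ht ?_ (nonempty_of_mem_openSimplex hx')) ?_).notMem_of_mem_left hx hx'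
  · intro v hv
    exact hpos v (Finset.mem_filter.1 hv).1 (Finset.mem_filter.1 hv).2
  · intro v hv
    exact hneg v (Finset.mem_filter.1 hv).1 (Finset.mem_filter.1 hv).2
  · exact Finset.disjoint_filter.2 fun v _ ↦ lt_asymm

variable (F) in
/-- The geometric simplicial complex with faces `F`. Only *disjoint* faces have to be checked to
have disjoint open simplices: affine independence and the intersection axiom follow. -/
def simplicialComplexOfOpenSimplex (hF : IsRelLowerSet F Finset.Nonempty)
    (hdisj : ∀ s ∈ F, ∀ t ∈ F, Disjoint s t → Disjoint (openSimplex 𝕜 s) (openSimplex 𝕜 t)) :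
    Geometry.SimplicialComplex 𝕜 E where
  faces := F
  isRelLowerSet_faces := hF
  indep {s} hs := by
    refine affineIndependent_iff.2 fun u w hw hwv v hv ↦ ?_
    have hext (v : s) : Function.extend Subtype.val w 0 (v : E) = w v :=
      Subtype.val_injective.extend_apply w 0 v
    have key := eq_zero_of_sum_smul_eq_zero hF hdisj hs hs (u := u.map (.subtype _))
      (w := Function.extend Subtype.val w 0) (by simp +contextual) (by simp +contextual)
      (by simpa [hext] using hw) (by simpa [hext] using hwv) v (by simpa using hv)
    rwa [hext] at key
  inter_subset_convexHull {s t} hs ht x hx := by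
    classical
    obtain ⟨a, ha, ha₁, hax⟩ := Finset.mem_convexHull'.1 hx.1
    obtain ⟨b, hb, hb₁, hbx⟩ := Finset.mem_convexHull'.1 hx.2
    have key := eq_zero_of_sum_smul_eq_zero hF hdisj hs ht (u := s ∪ t)
      (w := fun v ↦ (if v ∈ s then a v else 0) - if v ∈ t then b v else 0)
      (by grind) (by grind)
      (by simp [Finset.sum_ite_mem, Finset.union_inter_cancel_left,
        Finset.union_inter_cancel_right, ha₁, hb₁])
      (by simp [sub_smul, ite_smul, Finset.sum_ite_mem, Finset.union_inter_cancel_left,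
        Finset.union_inter_cancel_right, hax, hbx])
    have hzero : ∀ v ∈ s, v ∉ s ∩ t → a v = 0 := by grind
    rw [← Finset.coe_inter, Finset.mem_convexHull']
    refine ⟨a, fun v hv ↦ ha v (Finset.mem_inter.1 hv).1, ?_, ?_⟩
    · rw [Finset.sum_subset Finset.inter_subset_left hzero, ha₁]
    · rw [Finset.sum_subset Finset.inter_subset_left
        fun v hv hv' ↦ by rw [hzero v hv hv', zero_smul], hax]

end OpenSimplex

section UnitCell

lemma exists_two_zpow_eq_natCast_mul (R : Type*) [DivisionRing R] [CharZero R] {k n : ℤ}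
    (h : k ≤ n) : ∃ M : ℕ, 0 < M ∧ (2 : R) ^ n = M * 2 ^ k := by
  refine ⟨2 ^ (n - k).toNat, by positivity, ?_⟩
  rw [Nat.cast_pow, Nat.cast_ofNat, ← zpow_natCast, Int.toNat_of_nonneg (by omega),
    ← zpow_add₀ two_ne_zero, sub_add_cancel]

variable {R : Type*} [Field R] [LinearOrder R] [FloorRing R] {t u ξ : R}

/-- The closed cell of the grid `ℤ` whose relative interior contains `t`: the point `t` itself if
`t` is an integer, and a unit interval otherwise. -/
def unitCell (t : R) : Set R := Icc (⌊t⌋ : R) ⌈t⌉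

/-- The union of all closed unit intervals with integral endpoints that contain `t`. -/
def unitStar (t : R) : Set R := Icc (⌈t⌉ - 1 : R) (⌊t⌋ + 1)

/-- The midpoint of `unitCell t`. -/
def unitCenter (t : R) : R := (⌊t⌋ + ⌈t⌉) / 2

lemma mem_unitCell_self (t : R) : t ∈ unitCell t := ⟨Int.floor_le t, Int.le_ceil t⟩

lemma floor_le_floor_of_mem_unitCell (h : u ∈ unitCell t) : ⌊t⌋ ≤ ⌊u⌋ := Int.le_floor.2 h.1

lemma ceil_le_ceil_of_mem_unitCell (h : u ∈ unitCell t) : ⌈u⌉ ≤ ⌈t⌉ := Int.ceil_le.2 h.2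

lemma mem_Ioo_floor_ceil (ht : t ∉ range ((↑) : ℤ → R)) : t ∈ Ioo (⌊t⌋ : R) ⌈t⌉ :=
  ⟨(Int.floor_le t).lt_of_ne fun h ↦ ht ⟨_, h⟩, (Int.le_ceil t).lt_of_ne fun h ↦ ht ⟨_, h.symm⟩⟩

lemma intCast_add_half_notMem_range (q : ℤ) : (q + 1 / 2 : R) ∉ range ((↑) : ℤ → R) := by
  rintro ⟨z, hz⟩
  have h : ((2 * z : ℤ) : R) = (2 * q + 1 : ℤ) := by push_cast; rw [hz]; ring
  have := Int.cast_injective h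
  omega

lemma unitCenter_eq_unitCenter (h : u ∈ unitCell t) (h' : t ∈ unitCell u) :
    unitCenter u = unitCenter t := by
  rw [unitCenter, unitCenter,
    (floor_le_floor_of_mem_unitCell h).antisymm (floor_le_floor_of_mem_unitCell h'),
    (ceil_le_ceil_of_mem_unitCell h).antisymm (ceil_le_ceil_of_mem_unitCell h')]

variable [IsStrictOrderedRing R]

lemma unitCell_subset_unitCell (h : u ∈ unitCell t) : unitCell u ⊆ unitCell t :=
  Icc_subset_Icc (Int.cast_le.2 (floor_le_floor_of_mem_unitCell h))
    (Int.cast_le.2 (ceil_le_ceil_of_mem_unitCell h))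

lemma unitStar_subset_unitStar (h : u ∈ unitCell t) : unitStar t ⊆ unitStar u :=
  Icc_subset_Icc (sub_le_sub_right (Int.cast_le.2 (ceil_le_ceil_of_mem_unitCell h)) 1)
    (add_le_add_left (Int.cast_le.2 (floor_le_floor_of_mem_unitCell h)) 1)

lemma unitCell_subset_unitStar (t : R) : unitCell t ⊆ unitStar t := by
  have h : (⌈t⌉ : R) ≤ ⌊t⌋ + 1 := by exact_mod_cast Int.ceil_le_floor_add_one t
  exact Icc_subset_Icc (sub_le_iff_le_add.2 h) h

lemma abs_sub_le_one_of_mem_unitStar (h : u ∈ unitStar t) : |t - u| ≤ 1 := by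
  rw [abs_le]
  constructor <;> linarith [h.1, h.2, Int.floor_le t, Int.le_ceil t]

lemma mem_unitCell_of_natCast_mul_mem {M : ℕ} (hM : 0 < M) (h : M * u ∈ unitCell (M * t)) :
    u ∈ unitCell t := by
  have hM' : (0 : R) < M := Nat.cast_pos.2 hM
  have hfloor : (M : ℤ) * ⌊t⌋ ≤ ⌊M * t⌋ := Int.le_floor.2 (by
    push_cast; exact mul_le_mul_of_nonneg_left (Int.floor_le t) hM'.le)
  have hceil : ⌈M * t⌉ ≤ (M : ℤ) * ⌈t⌉ := Int.ceil_le.2 (by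
    push_cast; exact mul_le_mul_of_nonneg_left (Int.le_ceil t) hM'.le)
  exact ⟨le_of_mul_le_mul_left (le_trans (by exact_mod_cast hfloor) h.1) hM',
    le_of_mul_le_mul_left (h.2.trans (by exact_mod_cast hceil)) hM'⟩

lemma mem_unitStar_of_natCast_mul_mem {M : ℕ} (hM : 0 < M) (h : M * u ∈ unitStar (M * t)) :
    u ∈ unitStar t := by
  have hM' : (0 : R) < M := Nat.cast_pos.2 hM
  have hceil : (M : ℤ) * (⌈t⌉ - 1) < ⌈M * t⌉ := Int.lt_ceil.2 (by
    push_cast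
    exact mul_lt_mul_of_pos_left (sub_lt_iff_lt_add.2 (Int.ceil_lt_add_one t)) hM')
  have hfloor : ⌊M * t⌋ < (M : ℤ) * (⌊t⌋ + 1) := Int.floor_lt.2 (by
    push_cast
    exact mul_lt_mul_of_pos_left (Int.lt_floor_add_one t) hM')
  refine ⟨le_of_mul_le_mul_left (le_trans ?_ h.1) hM', le_of_mul_le_mul_left (h.2.trans ?_) hM'⟩
  · exact_mod_cast Int.le_sub_one_of_lt hceil
  · exact_mod_cast Int.add_one_le_of_lt hfloor

lemma exists_two_mul_eq_intCast_of_unitCenter_eq (h : unitCenter t = t) : ∃ z : ℤ, 2 * t = z :=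
  ⟨⌊t⌋ + ⌈t⌉, by rw [unitCenter] at h; push_cast; linarith⟩

lemma unitCell_eq_singleton (ht : t ∈ range ((↑) : ℤ → R)) : unitCell t = {t} := by
  obtain ⟨z, rfl⟩ := ht
  simp [unitCell]

lemma floor_add_one_eq_ceil (ht : t ∉ range ((↑) : ℤ → R)) : (⌊t⌋ + 1 : R) = ⌈t⌉ := by
  exact_mod_cast ((Int.ceil_eq_floor_add_one_iff_notMem t).2 ht).symm

lemma mem_unitCell_of_mem_Ioo (ht : t ∉ range ((↑) : ℤ → R)) (hu : u ∈ Ioo (⌊t⌋ : R) ⌈t⌉) :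
    t ∈ unitCell u := by
  have hceil := floor_add_one_eq_ceil ht
  have hfloor_u : ⌊u⌋ = ⌊t⌋ := Int.floor_eq_iff.2 ⟨hu.1.le, hceil ▸ hu.2⟩
  have hceil_u : ⌈u⌉ = ⌈t⌉ := Int.ceil_eq_iff.2 ⟨by linarith [hu.1], hu.2.le⟩
  rw [unitCell, hfloor_u, hceil_u]
  exact mem_unitCell_self t

lemma unitCenter_mem_unitCell (t : R) : unitCenter t ∈ unitCell t := by
  have h := (Int.floor_le t).trans (Int.le_ceil t)
  constructor <;> rw [unitCenter] <;> linarith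

lemma mem_unitCell_unitCenter (t : R) : t ∈ unitCell (unitCenter t) := by
  by_cases ht : t ∈ range ((↑) : ℤ → R)
  · have h : unitCenter t = t := (unitCell_eq_singleton ht).subset (unitCenter_mem_unitCell t)
    rw [h]
    exact mem_unitCell_self t
  · refine mem_unitCell_of_mem_Ioo ht ?_
    have h := (mem_Ioo_floor_ceil ht).1.trans (mem_Ioo_floor_ceil ht).2
    constructor <;> rw [unitCenter] <;> linarith

lemma mem_unitCell_of_mem_openSegment (hu : u ∈ unitCell t) (hξ : ξ ∈ openSegment R t u) :
    t ∈ unitCell ξ := by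
  by_cases ht : t ∈ range ((↑) : ℤ → R)
  · obtain rfl : u = t := (unitCell_eq_singleton ht).subset hu
    rw [openSegment_same] at hξ
    exact hξ ▸ mem_unitCell_self u
  · refine mem_unitCell_of_mem_Ioo ht ?_
    obtain ⟨a, b, ha, hb, hab, rfl⟩ := hξ
    obtain ⟨hlt, hlt'⟩ := mem_Ioo_floor_ceil ht
    obtain rfl : b = 1 - a := by linarith
    simp only [smul_eq_mul]
    constructor <;> nlinarith [hu.1, hu.2]

lemma abs_sub_le_half_of_unitCenter_eq (ht : unitCenter t = t) (hu : u ∈ unitCell t) :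
    |u - t| ≤ 1 / 2 := by
  have h : (⌈t⌉ : R) ≤ ⌊t⌋ + 1 := by exact_mod_cast Int.ceil_le_floor_add_one t
  rw [unitCenter] at ht
  rw [abs_le]
  constructor <;> linarith [hu.1, hu.2]

lemma mem_unitCell_of_abs_sub_le_half (ht : t ∉ range ((↑) : ℤ → R)) (hc : unitCenter t = t)
    (hu : |u - t| ≤ 1 / 2) : u ∈ unitCell t := by
  have hceil := floor_add_one_eq_ceil ht
  obtain ⟨h, h'⟩ := abs_le.1 hu
  rw [unitCenter] at hc
  constructor <;> linarith

lemma mem_range_intCast_of_abs_sub_eq_half (ht : t ∉ range ((↑) : ℤ → R)) (hc : unitCenter t = t)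
    (hu : |u - t| = 1 / 2) : u ∈ range ((↑) : ℤ → R) := by
  have hceil := floor_add_one_eq_ceil ht
  rw [unitCenter] at hc
  rcases (abs_eq (by norm_num)).1 hu with h | h
  · exact ⟨⌈t⌉, by linarith⟩
  · exact ⟨⌊t⌋, by linarith⟩

lemma center_mem_unitCell_of_abs_sub_lt_half (ht : unitCenter t = t) (hu : u ∈ unitCell t)
    (hlt : |u - t| < 1 / 2) : t ∈ unitCell u := by
  by_cases hint : t ∈ range ((↑) : ℤ → R)
  · obtain rfl : u = t := (unitCell_eq_singleton hint).subset hu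
    exact mem_unitCell_self u
  · refine mem_unitCell_of_mem_Ioo hint ?_
    have hceil := floor_add_one_eq_ceil hint
    rw [unitCenter] at ht
    obtain ⟨h, h'⟩ := abs_lt.1 hlt
    constructor <;> linarith

lemma unitCell_intCast_add_half (q : ℤ) : unitCell (q + 1 / 2 : R) = Icc (q : R) (q + 1) := by
  have hfloor : ⌊(q + 1 / 2 : R)⌋ = q := Int.floor_eq_iff.2 ⟨by linarith, by linarith⟩
  rw [unitCell, ← floor_add_one_eq_ceil (intCast_add_half_notMem_range q), hfloor]

lemma exists_mem_unitCell_natCast_mul {M : ℕ} (hM : 0 < M) (ht : t ∉ range ((↑) : ℤ → R))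
    (hu : u ∈ unitCell t) :
    ∃ c ∈ unitCell t, M * c ∉ range ((↑) : ℤ → R) ∧ M * u ∈ unitCell (M * c) := by
  have hM' : (0 : R) < M := Nat.cast_pos.2 hM
  set q : ℤ := min ⌊M * u⌋ (M * ⌈t⌉ - 1) with hq
  have hMc : (M * ((q + 1 / 2) / M) : R) = q + 1 / 2 := mul_div_cancel₀ _ hM'.ne'
  have hqu : (q : R) ≤ M * u := Int.le_floor.1 (min_le_left _ _)
  have hqt : (q : R) ≤ M * ⌈t⌉ - 1 := by exact_mod_cast min_le_right _ _
  have hle : M * ⌊t⌋ ≤ q := by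
    refine le_min (Int.le_floor.2 ?_) ?_
    · push_cast
      exact mul_le_mul_of_nonneg_left hu.1 hM'.le
    · have : ⌈t⌉ = ⌊t⌋ + 1 := (Int.ceil_eq_floor_add_one_iff_notMem t).2 ht
      rw [this]
      nlinarith
  have huq : (M * u : R) ≤ q + 1 := by
    rcases min_choice ⌊M * u⌋ (M * ⌈t⌉ - 1) with h | h
    · rw [hq, h]
      exact (Int.lt_floor_add_one _).le
    · rw [hq, h]
      push_cast
      linarith [mul_le_mul_of_nonneg_left hu.2 hM'.le]
  have hle' : (M * ⌊t⌋ : R) ≤ q := by exact_mod_cast hle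
  refine ⟨(q + 1 / 2) / M, ⟨?_, ?_⟩, ?_, ?_⟩
  · rw [le_div_iff₀ hM']; linarith
  · rw [div_le_iff₀ hM']; linarith
  · rw [hMc]; exact intCast_add_half_notMem_range q
  · rw [hMc, unitCell_intCast_add_half]; exact ⟨hqu, huq⟩

end UnitCell

section DyadicCell

variable {ι : Type*} {k n : ℤ} {x y p : EuclideanSpace ℝ ι} {i : ι}

/-- The closed cell of the grid `(2⁻ᵏ ℤ)^ι` whose relative interior contains `x`. -/
def dyadicCell (k : ℤ) (x : EuclideanSpace ℝ ι) : Set (EuclideanSpace ℝ ι) :=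
  {y | ∀ i, 2 ^ k * y i ∈ unitCell (2 ^ k * x i)}

/-- The union of all closed cubes of the grid `(2⁻ᵏ ℤ)^ι` that contain `x`. -/
def dyadicStar (k : ℤ) (x : EuclideanSpace ℝ ι) : Set (EuclideanSpace ℝ ι) :=
  {y | ∀ i, 2 ^ k * y i ∈ unitStar (2 ^ k * x i)}

/-- The barycenter of `dyadicCell k x`. -/
def cellCenter (k : ℤ) (x : EuclideanSpace ℝ ι) : EuclideanSpace ℝ ι :=
  WithLp.toLp 2 fun i ↦ 2 ^ (-k) * unitCenter (2 ^ k * x i)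

lemma mem_dyadicCell_self (k : ℤ) (x : EuclideanSpace ℝ ι) : x ∈ dyadicCell k x :=
  fun _ ↦ mem_unitCell_self _

lemma dyadicCell_subset_dyadicCell (h : y ∈ dyadicCell k x) : dyadicCell k y ⊆ dyadicCell k x :=
  fun _ hz i ↦ unitCell_subset_unitCell (h i) (hz i)

lemma dyadicStar_subset_dyadicStar (h : y ∈ dyadicCell k x) : dyadicStar k x ⊆ dyadicStar k y :=
  fun _ hz i ↦ unitStar_subset_unitStar (h i) (hz i)

lemma dyadicCell_subset_dyadicStar (h : y ∈ dyadicCell k x) : dyadicCell k x ⊆ dyadicStar k y :=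
  fun _ hz i ↦ unitStar_subset_unitStar (h i) (unitCell_subset_unitStar _ (hz i))

lemma antitone_dyadicCell (x : EuclideanSpace ℝ ι) : Antitone (dyadicCell · x) := by
  intro k n hkn y hy i
  obtain ⟨M, hM, hpow⟩ := exists_two_zpow_eq_natCast_mul ℝ hkn
  have h := hy i
  rw [hpow, mul_assoc, mul_assoc] at h
  exact mem_unitCell_of_natCast_mul_mem hM h

lemma antitone_dyadicStar (x : EuclideanSpace ℝ ι) : Antitone (dyadicStar · x) := by
  intro k n hkn y hy i
  obtain ⟨M, hM, hpow⟩ := exists_two_zpow_eq_natCast_mul ℝ hkn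
  have h := hy i
  rw [hpow, mul_assoc, mul_assoc] at h
  exact mem_unitStar_of_natCast_mul_mem hM h

lemma convex_dyadicCell (k : ℤ) (x : EuclideanSpace ℝ ι) : Convex ℝ (dyadicCell k x) := by
  intro y hy z hz a b ha hb hab i
  have h := convex_Icc _ _ (hy i) (hz i) ha hb hab
  simpa only [unitCell, PiLp.add_apply, PiLp.smul_apply, smul_eq_mul, mul_add,
    mul_left_comm] using h

lemma mem_dyadicCell_of_mem_openSegment (hy : y ∈ dyadicCell k x) (hp : p ∈ openSegment ℝ x y) :
    x ∈ dyadicCell k p := by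
  obtain ⟨a, b, ha, hb, hab, rfl⟩ := hp
  refine fun i ↦ mem_unitCell_of_mem_openSegment (hy i) ⟨a, b, ha, hb, hab, ?_⟩
  simp only [PiLp.add_apply, PiLp.smul_apply, smul_eq_mul]
  ring

lemma two_zpow_mul_cellCenter (k : ℤ) (x : EuclideanSpace ℝ ι) (i : ι) :
    2 ^ k * cellCenter k x i = unitCenter (2 ^ k * x i) := by
  simp only [cellCenter, zpow_neg]
  exact mul_inv_cancel_left₀ (by positivity) _

lemma unitCenter_two_zpow_mul (hx : cellCenter k x = x) (i : ι) :
    unitCenter (2 ^ k * x i) = 2 ^ k * x i := by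
  rw [← two_zpow_mul_cellCenter, hx]

lemma cellCenter_mem_dyadicCell (k : ℤ) (x : EuclideanSpace ℝ ι) :
    cellCenter k x ∈ dyadicCell k x := fun i ↦ by
  rw [two_zpow_mul_cellCenter]
  exact unitCenter_mem_unitCell _

lemma mem_dyadicCell_cellCenter (k : ℤ) (x : EuclideanSpace ℝ ι) :
    x ∈ dyadicCell k (cellCenter k x) := fun i ↦ by
  rw [two_zpow_mul_cellCenter]
  exact mem_unitCell_unitCenter _

lemma cellCenter_eq_cellCenter (h : y ∈ dyadicCell k x) (h' : x ∈ dyadicCell k y) :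
    cellCenter k y = cellCenter k x := by
  ext i
  simp only [cellCenter, unitCenter_eq_unitCenter (h i) (h' i)]

lemma two_zpow_mul_add_smul_sub_apply (k : ℤ) (x p : EuclideanSpace ℝ ι) (a : ℝ) (i : ι) :
    2 ^ k * (x + a • (p - x)) i - 2 ^ k * x i = a * (2 ^ k * p i - 2 ^ k * x i) := by
  simp only [PiLp.add_apply, PiLp.smul_apply, PiLp.sub_apply, smul_eq_mul]
  ring

lemma add_smul_sub_mem_dyadicCell (hx : cellCenter k x = x) (hp : p ∈ dyadicCell k x) {a : ℝ}
    (ha : ∀ i, |a * (2 ^ k * p i - 2 ^ k * x i)| ≤ 1 / 2) : x + a • (p - x) ∈ dyadicCell k x := by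
  intro i
  have hcoord := two_zpow_mul_add_smul_sub_apply k x p a i
  by_cases hi : 2 ^ k * x i ∈ range ((↑) : ℤ → ℝ)
  · have hpi : 2 ^ k * p i = 2 ^ k * x i := (unitCell_eq_singleton hi).subset (hp i)
    rw [hpi, sub_self, mul_zero, sub_eq_zero] at hcoord
    exact hcoord ▸ mem_unitCell_self _
  · exact mem_unitCell_of_abs_sub_le_half hi (unitCenter_two_zpow_mul hx i) (hcoord ▸ ha i)

section Fintype

variable [Fintype ι]

variable (ι) in
/-- The diameter of a cube of side length `2⁻ᵏ` in `EuclideanSpace ℝ ι`. -/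
def cubeDiam (k : ℤ) : ℝ := √(Fintype.card ι) * 2 ^ (-k)

lemma cubeDiam_pos [Nonempty ι] (k : ℤ) : 0 < cubeDiam ι k :=
  mul_pos (Real.sqrt_pos.2 (Nat.cast_pos.2 Fintype.card_pos)) (by positivity)

lemma cubeDiam_add_one (k : ℤ) : cubeDiam ι (k + 1) = cubeDiam ι k / 2 := by
  rw [cubeDiam, cubeDiam, neg_add, zpow_add₀ two_ne_zero, zpow_neg_one]
  ring

lemma antitone_cubeDiam : Antitone (cubeDiam ι) := fun _ _ hkn ↦
  mul_le_mul_of_nonneg_left (zpow_le_zpow_right₀ one_le_two (neg_le_neg hkn)) (Real.sqrt_nonneg _)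

lemma exists_cubeDiam_le_lt [Nonempty ι] {r : ℝ} (hr : 0 < r) :
    ∃ k, cubeDiam ι (k + 1) ≤ r ∧ r < cubeDiam ι k := by
  have hcard : 0 < √(Fintype.card ι : ℝ) := by positivity
  obtain ⟨k, hk, hk'⟩ := exists_mem_Ico_zpow (div_pos hr hcard) one_lt_two
  refine ⟨-(k + 1), ?_, ?_⟩
  · rwa [cubeDiam, ← le_div_iff₀' hcard, show -(-(k + 1) + 1) = k by ring]
  · rwa [cubeDiam, neg_neg, ← div_lt_iff₀' hcard]

lemma dist_le_sqrt_card_mul {r : ℝ} (hr : 0 ≤ r) (h : ∀ i, |x i - y i| ≤ r) :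
    dist x y ≤ √(Fintype.card ι) * r := by
  rw [EuclideanSpace.dist_eq, ← Real.sqrt_sq hr, ← Real.sqrt_mul (Nat.cast_nonneg _)]
  refine Real.sqrt_le_sqrt ?_
  calc ∑ i, dist (x i) (y i) ^ 2 ≤ ∑ _i : ι, r ^ 2 :=
        Finset.sum_le_sum fun i _ ↦ pow_le_pow_left₀ dist_nonneg (h i) 2
    _ = Fintype.card ι * r ^ 2 := by rw [Finset.sum_const, Finset.card_univ, nsmul_eq_mul]

lemma dist_le_cubeDiam_of_mem_dyadicStar (h : y ∈ dyadicStar k x) : dist x y ≤ cubeDiam ι k := by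
  refine dist_le_sqrt_card_mul (by positivity) fun i ↦ ?_
  have hi := abs_sub_le_one_of_mem_unitStar (h i)
  rw [← mul_sub, abs_mul, abs_of_pos (by positivity)] at hi
  rwa [zpow_neg, ← one_div, le_div_iff₀' (by positivity)]

lemma dist_le_cubeDiam_of_mem_dyadicCell {u v : EuclideanSpace ℝ ι} (hu : u ∈ dyadicCell k x)
    (hv : v ∈ dyadicCell k x) : dist u v ≤ cubeDiam ι k :=
  dist_le_cubeDiam_of_mem_dyadicStar (dyadicCell_subset_dyadicStar hu hv)

open Classical in
/-- The coordinates in which `dyadicCell k x` is nondegenerate; their number is its dimension. -/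
def freeCoords (k : ℤ) (x : EuclideanSpace ℝ ι) : Finset ι :=
  {i | 2 ^ k * x i ∉ range ((↑) : ℤ → ℝ)}

lemma mem_freeCoords : i ∈ freeCoords k x ↔ 2 ^ k * x i ∉ range ((↑) : ℤ → ℝ) := by
  simp [freeCoords]

lemma notMem_freeCoords : i ∉ freeCoords k x ↔ 2 ^ k * x i ∈ range ((↑) : ℤ → ℝ) := by
  simp [freeCoords]

lemma apply_eq_of_notMem_freeCoords (hy : y ∈ dyadicCell k x) (hi : i ∉ freeCoords k x) :
    y i = x i := by
  have h := hy i
  rw [unitCell_eq_singleton (notMem_freeCoords.1 hi)] at h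
  exact mul_left_cancel₀ (by positivity) h

lemma freeCoords_subset_freeCoords (hy : y ∈ dyadicCell k x) : freeCoords k y ⊆ freeCoords k x := by
  intro i hi
  by_contra hix
  rw [mem_freeCoords, apply_eq_of_notMem_freeCoords hy hix] at hi
  exact hi (notMem_freeCoords.1 hix)

lemma antitone_freeCoords (x : EuclideanSpace ℝ ι) : Antitone (freeCoords · x) := by
  intro k n hkn i hi
  obtain ⟨M, -, hpow⟩ := exists_two_zpow_eq_natCast_mul ℝ hkn
  refine mem_freeCoords.2 fun ⟨z, hz⟩ ↦ mem_freeCoords.1 hi ⟨M * z, ?_⟩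
  rw [hpow, mul_assoc, ← hz]
  push_cast
  rfl

lemma exists_mem_dyadicCell_subset_freeCoords (hkn : k ≤ n) (hy : y ∈ dyadicCell k x) {s : Finset ι}
    (hs : s ⊆ freeCoords k x) :
    ∃ z ∈ dyadicCell k x, y ∈ dyadicCell n z ∧ s ⊆ freeCoords n z ∧ ∀ i ∉ s, z i = y i := by
  classical
  obtain ⟨M, hM, hpow⟩ := exists_two_zpow_eq_natCast_mul ℝ hkn
  have hcoord (i : ι) : ∃ a : ℝ, 2 ^ k * a ∈ unitCell (2 ^ k * x i) ∧
      2 ^ n * y i ∈ unitCell (2 ^ n * a) ∧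
      (i ∈ s → 2 ^ n * a ∉ range ((↑) : ℤ → ℝ)) ∧ (i ∉ s → a = y i) := by
    by_cases hi : i ∈ s
    · obtain ⟨c, hcx, hc, hyc⟩ :=
        exists_mem_unitCell_natCast_mul hM (mem_freeCoords.1 (hs hi)) (hy i)
      have hkc : (2 : ℝ) ^ k * (c / 2 ^ k) = c := mul_div_cancel₀ c (by positivity)
      refine ⟨c / 2 ^ k, ?_, ?_, fun _ ↦ ?_, fun h ↦ absurd hi h⟩
      · rwa [hkc]
      · rwa [hpow, mul_assoc, mul_assoc, hkc]
      · rwa [hpow, mul_assoc, hkc]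
    · exact ⟨y i, hy i, mem_unitCell_self _, fun h ↦ absurd h hi, fun _ ↦ rfl⟩
  choose a hax hya hfree hfix using hcoord
  exact ⟨WithLp.toLp 2 a, hax, hya, fun i hi ↦ mem_freeCoords.2 (hfree i hi), hfix⟩

lemma exists_mem_segment_of_ne (hx : cellCenter k x = x) (hp : p ∈ dyadicCell k x) (hne : p ≠ x) :
    ∃ y ∈ dyadicCell k x, ∃ j ∈ freeCoords k x, j ∉ freeCoords k y ∧ p ∈ segment ℝ x y := by
  obtain ⟨i₀, hi₀⟩ : ∃ i, p i ≠ x i := by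
    by_contra! h
    exact hne (by ext i; exact h i)
  have : Nonempty ι := ⟨i₀⟩
  obtain ⟨j, hj⟩ := Finite.exists_max fun i ↦ |2 ^ k * p i - 2 ^ k * x i|
  set r := |2 ^ k * p j - 2 ^ k * x j| with hr
  have hr_pos : 0 < r := by
    refine (abs_pos.2 ?_).trans_le (hj i₀)
    rw [← mul_sub]
    exact mul_ne_zero (by positivity) (sub_ne_zero.2 hi₀)
  have hr_half : r ≤ 1 / 2 :=
    abs_sub_le_half_of_unitCenter_eq (unitCenter_two_zpow_mul hx j) (hp j)
  have hjfree : j ∈ freeCoords k x := by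
    by_contra hj'
    rw [hr, apply_eq_of_notMem_freeCoords hp hj', sub_self, abs_zero] at hr_pos
    exact hr_pos.false
  have habs (i : ι) : |(2 * r)⁻¹ * (2 ^ k * p i - 2 ^ k * x i)|
      = |2 ^ k * p i - 2 ^ k * x i| / (2 * r) := by
    rw [abs_mul, abs_of_pos (by positivity), inv_mul_eq_div]
  refine ⟨x + (2 * r)⁻¹ • (p - x), add_smul_sub_mem_dyadicCell hx hp fun i ↦ ?_, j, hjfree, ?_, ?_⟩
  · rw [habs, div_le_iff₀ (by positivity)]
    linarith [hj i]
  · refine notMem_freeCoords.2 (mem_range_intCast_of_abs_sub_eq_half (mem_freeCoords.1 hjfree)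
      (unitCenter_two_zpow_mul hx j) ?_)
    rw [two_zpow_mul_add_smul_sub_apply, habs, ← hr]
    field_simp
  · rw [segment_eq_image']
    refine ⟨2 * r, ⟨by positivity, by linarith⟩, ?_⟩
    simp only [add_sub_cancel_left, smul_smul]
    rw [mul_inv_cancel₀ (by positivity), one_smul, add_sub_cancel]

/-- A cell is the join of its barycenter and its relative boundary: `p` is joined to the barycenter
`x` through a boundary point `y`. -/
lemma exists_mem_segment (hx : cellCenter k x = x) (hfree : (freeCoords k x).Nonempty)
    (hp : p ∈ dyadicCell k x) :
    ∃ y ∈ dyadicCell k x, ∃ j ∈ freeCoords k x, j ∉ freeCoords k y ∧ p ∈ segment ℝ x y := by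
  classical
  rcases ne_or_eq p x with hne | rfl
  · exact exists_mem_segment_of_ne hx hp hne
  obtain ⟨j, hj⟩ := hfree
  set p' := p + EuclideanSpace.single j (2 ^ (-k) * (1 / 2)) with hp'
  have hp'_mem : p' ∈ dyadicCell k p := by
    intro i
    by_cases hi : i = j
    · subst hi
      refine mem_unitCell_of_abs_sub_le_half (mem_freeCoords.1 hj) (unitCenter_two_zpow_mul hx i) ?_
      have : 2 ^ k * p' i - 2 ^ k * p i = 1 / 2 := by
        rw [hp', PiLp.add_apply, PiLp.single_apply, if_pos rfl, zpow_neg]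
        field_simp
        ring
      rw [this, abs_of_pos (by norm_num)]
    · have : p' i = p i := by simp [hp', hi]
      rw [this]
      exact mem_unitCell_self _
  have hne : p' ≠ p := by simp [hp', zpow_ne_zero]
  obtain ⟨y, hy, i, hi, hiy, -⟩ := exists_mem_segment_of_ne hx hp'_mem hne
  exact ⟨y, hy, i, hi, hiy, left_mem_segment ℝ p y⟩

end Fintype

end DyadicCell

/-- A decomposition of the set `carrier` into dyadic cells of varying size: `level x` determines the
grid `(2⁻ᵏ ℤ)^ι` whose cell around `x` belongs to the decomposition. The two axioms say that
`carrier` contains the faces and the cofaces of its cells, and that levels do not decrease when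
passing from a cell to a face. -/
structure DyadicSubdivision (ι : Type*) where
  carrier : Set (EuclideanSpace ℝ ι)
  level : EuclideanSpace ℝ ι → ℤ
  face_mem : ∀ {x y}, x ∈ carrier → y ∈ dyadicCell (level x) x → y ∈ carrier ∧ level x ≤ level y
  coface_mem : ∀ {x y}, y ∈ carrier → y ∈ dyadicCell (level y) x → x ∈ carrier ∧ level x ≤ level y

namespace DyadicSubdivision

variable {ι : Type*} (D : DyadicSubdivision ι) {s : Finset (EuclideanSpace ℝ ι)}
  {x y p u v : EuclideanSpace ℝ ι}

/-- The closed cell of the decomposition whose relative interior contains `x`. -/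
def cell (x : EuclideanSpace ℝ ι) : Set (EuclideanSpace ℝ ι) := dyadicCell (D.level x) x

/-- The barycenter of `D.cell x`. -/
def center (x : EuclideanSpace ℝ ι) : EuclideanSpace ℝ ι := cellCenter (D.level x) x

/-- The vertices of the barycentric subdivision: the barycenters of the cells. -/
def IsVertex (x : EuclideanSpace ℝ ι) : Prop := x ∈ D.carrier ∧ D.center x = x

/-- The simplices of the barycentric subdivision: flags of cells, each represented by the
barycenters of its members. -/
def simplices : Set (Finset (EuclideanSpace ℝ ι)) :=
  {s | s.Nonempty ∧ (∀ v ∈ s, D.IsVertex v) ∧ IsChain (· ∈ D.cell ·) (s : Set _)}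

variable {D}

lemma mem_cell_self (x : EuclideanSpace ℝ ι) : x ∈ D.cell x := mem_dyadicCell_self _ x

lemma convex_cell (x : EuclideanSpace ℝ ι) : Convex ℝ (D.cell x) := convex_dyadicCell _ x

lemma cell_subset_carrier (hx : x ∈ D.carrier) : D.cell x ⊆ D.carrier :=
  fun _ hy ↦ (D.face_mem hx hy).1

lemma level_le_level (hx : x ∈ D.carrier) (hy : y ∈ D.cell x) : D.level x ≤ D.level y :=
  (D.face_mem hx hy).2

lemma cell_subset_cell (hx : x ∈ D.carrier) (hy : y ∈ D.cell x) : D.cell y ⊆ D.cell x :=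
  (antitone_dyadicCell y (level_le_level hx hy)).trans (dyadicCell_subset_dyadicCell hy)

lemma level_eq_level (hx : x ∈ D.carrier) (hy : y ∈ D.cell x)
    (hxy : x ∈ dyadicCell (D.level x) y) : D.level y = D.level x :=
  (D.coface_mem hx hxy).2.antisymm (level_le_level hx hy)

lemma center_eq_center (hx : x ∈ D.carrier) (hy : y ∈ D.cell x)
    (hxy : x ∈ dyadicCell (D.level x) y) : D.center y = D.center x := by
  rw [center, center, level_eq_level hx hy hxy]
  exact cellCenter_eq_cellCenter hy hxy

lemma center_mem_cell (x : EuclideanSpace ℝ ι) : D.center x ∈ D.cell x :=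
  cellCenter_mem_dyadicCell _ x

lemma level_center (hx : x ∈ D.carrier) : D.level (D.center x) = D.level x :=
  level_eq_level hx (center_mem_cell x) (mem_dyadicCell_cellCenter _ x)

lemma cell_subset_cell_center (hx : x ∈ D.carrier) : D.cell x ⊆ D.cell (D.center x) := by
  rw [cell, cell, level_center hx]
  exact dyadicCell_subset_dyadicCell (mem_dyadicCell_cellCenter _ x)

lemma isVertex_center (hx : x ∈ D.carrier) : D.IsVertex (D.center x) :=
  ⟨cell_subset_carrier hx (center_mem_cell x),
    center_eq_center hx (center_mem_cell x) (mem_dyadicCell_cellCenter _ x)⟩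

lemma IsVertex.eq_of_mem_cell_of_mem_cell (hu : D.IsVertex u) (hv : D.IsVertex v)
    (huv : u ∈ D.cell v) (hvu : v ∈ D.cell u) : u = v := by
  have hlevel := (level_le_level hv.1 huv).antisymm (level_le_level hu.1 hvu)
  rw [← hu.2, ← hv.2]
  exact center_eq_center hv.1 huv (hlevel ▸ hvu)

lemma IsVertex.center_eq_of_mem_openSegment (hv : D.IsVertex v) (hy : y ∈ D.cell v)
    (hp : p ∈ openSegment ℝ v y) : D.center p = v := by
  have hpv : p ∈ D.cell v := (convex_cell v).openSegment_subset (mem_cell_self v) hy hp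
  rw [center_eq_center hv.1 hpv (mem_dyadicCell_of_mem_openSegment hy hp), hv.2]

lemma isRelLowerSet_simplices : IsRelLowerSet D.simplices Finset.Nonempty :=
  fun _ hs ↦ ⟨hs.1, fun _ hts ht ↦ ⟨ht, fun v hv ↦ hs.2.1 v (hts hv),
    hs.2.2.mono (Finset.coe_subset.2 hts)⟩⟩

lemma exists_subset_cell (hs : s ∈ D.simplices) : ∃ v ∈ s, (s : Set _) ⊆ D.cell v := by
  obtain ⟨v, hv, hmax⟩ := Finset.exists_maximalFor D.cell s hs.1
  refine ⟨v, hv, fun u hu ↦ ?_⟩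
  rcases eq_or_ne u v with rfl | hne
  · exact mem_cell_self u
  rcases hs.2.2 hu hv hne with h | h
  · exact h
  · exact hmax hu (cell_subset_cell (hs.2.1 u hu).1 h) (mem_cell_self u)

lemma convexHull_subset_carrier (hs : s ∈ D.simplices) :
    convexHull ℝ (s : Set _) ⊆ D.carrier := by
  obtain ⟨v, hv, hsv⟩ := exists_subset_cell hs
  exact (convexHull_min hsv (convex_cell v)).trans (cell_subset_carrier (hs.2.1 v hv).1)

/-- The interior of a simplex lies in the relative interior of the largest cell of the flag, so this
vertex can be read off from any interior point. -/
lemma center_mem_of_mem_openSimplex (hs : s ∈ D.simplices) (hx : x ∈ openSimplex ℝ s) :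
    D.center x ∈ s := by
  obtain ⟨v, hv, hsv⟩ := exists_subset_cell hs
  obtain ⟨y, hy, hxy⟩ := exists_mem_openSegment_of_mem_openSimplex hx hv
  rwa [(hs.2.1 v hv).center_eq_of_mem_openSegment (convexHull_min hsv (convex_cell v) hy) hxy]

variable (D) in
/-- The barycentric subdivision of `D`, as a geometric simplicial complex. -/
def complex : Geometry.SimplicialComplex ℝ (EuclideanSpace ℝ ι) :=
  simplicialComplexOfOpenSimplex D.simplices isRelLowerSet_simplices fun _ hs _ ht hst ↦
    disjoint_left.2 fun _ hxs hxt ↦ Finset.disjoint_left.1 hst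
      (center_mem_of_mem_openSimplex hs hxs) (center_mem_of_mem_openSimplex ht hxt)

lemma insert_mem_simplices [DecidableEq (EuclideanSpace ℝ ι)] (hs : s ∈ D.simplices)
    (hv : D.IsVertex v) (hsv : (s : Set _) ⊆ D.cell v) : insert v s ∈ D.simplices := by
  refine ⟨Finset.insert_nonempty v s, fun u hu ↦ ?_, ?_⟩
  · rcases Finset.mem_insert.1 hu with rfl | hu
    exacts [hv, hs.2.1 u hu]
  · rw [Finset.coe_insert]
    exact hs.2.2.insert fun u hu _ ↦ Or.inr (hsv hu)

section Covering

variable [Fintype ι]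

lemma freeCoords_center (hx : x ∈ D.carrier) :
    freeCoords (D.level (D.center x)) (D.center x) = freeCoords (D.level x) x := by
  rw [level_center hx]
  exact (freeCoords_subset_freeCoords (cellCenter_mem_dyadicCell _ x)).antisymm
    (freeCoords_subset_freeCoords (mem_dyadicCell_cellCenter _ x))

lemma exists_mem_cell_freeCoords_eq_erase [DecidableEq ι] (hx : x ∈ D.carrier) (hy : y ∈ D.cell x)
    {j : ι} (hj : j ∉ freeCoords (D.level x) y) :
    ∃ z ∈ D.cell x, y ∈ D.cell z ∧
      freeCoords (D.level z) z = (freeCoords (D.level x) x).erase j := by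
  obtain ⟨z, hzx, hyz, hfree, hfix⟩ := exists_mem_dyadicCell_subset_freeCoords
    (level_le_level hx hy) hy (Finset.erase_subset j (freeCoords (D.level x) x))
  have hxz : D.level x ≤ D.level z := level_le_level hx hzx
  have hzy : D.level z ≤ D.level y := (D.coface_mem (cell_subset_carrier hx hy) hyz).2
  refine ⟨z, hzx, antitone_dyadicCell z hzy hyz,
    Finset.Subset.antisymm (fun i hi ↦ ?_) (hfree.trans (antitone_freeCoords z hzy))⟩
  by_contra hi'
  have hiy : i ∈ freeCoords (D.level x) y := by
    rw [mem_freeCoords, ← hfix i hi', ← mem_freeCoords]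
    exact antitone_freeCoords z hxz hi
  exact hi' (Finset.mem_erase.2 ⟨fun h ↦ hj (h ▸ hiy), freeCoords_subset_freeCoords hy hiy⟩)

lemma exists_mem_simplices_of_mem_cell (d : ℕ) : ∀ {x p : EuclideanSpace ℝ ι}, D.IsVertex x →
    (freeCoords (D.level x) x).card = d → p ∈ D.cell x →
    ∃ s ∈ D.simplices, s.card = d + 1 ∧ (s : Set _) ⊆ D.cell x ∧ p ∈ convexHull ℝ (s : Set _) := by
  classical
  induction d with
  | zero =>
    intro x p hx hd hp
    have hpx : p = x := by
      ext i
      exact apply_eq_of_notMem_freeCoords hp (by simp [Finset.card_eq_zero.1 hd])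
    exact ⟨{x}, ⟨by simp, by simpa using hx, by simp⟩, by simp, by simp [mem_cell_self],
      by simp [hpx]⟩
  | succ d ih =>
    intro x p hx hd hp
    obtain ⟨y, hyx, j, hj, hjy, hpy⟩ :=
      exists_mem_segment hx.2 (Finset.card_pos.1 (by omega)) hp
    obtain ⟨z, hzx, hyz, hz⟩ := exists_mem_cell_freeCoords_eq_erase hx.1 hyx hjy
    have hzD : z ∈ D.carrier := cell_subset_carrier hx.1 hzx
    have hcard : (freeCoords (D.level (D.center z)) (D.center z)).card = d := by
      rw [freeCoords_center hzD, hz, Finset.card_erase_of_mem hj, hd, Nat.add_sub_cancel]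
    have hyc : y ∈ D.cell (D.center z) := cell_subset_cell_center hzD hyz
    obtain ⟨s, hs, hscard, hsz, hys⟩ := ih (isVertex_center hzD) hcard hyc
    have hcx : D.center z ∈ D.cell x := cell_subset_cell hx.1 hzx (center_mem_cell z)
    have hsx : (s : Set _) ⊆ D.cell x := hsz.trans (cell_subset_cell hx.1 hcx)
    have hxs : x ∉ s := fun hxs ↦ by
      have := (isVertex_center hzD).eq_of_mem_cell_of_mem_cell hx hcx (hsz hxs)
      rw [this, hd] at hcard
      omega
    refine ⟨insert x s, insert_mem_simplices hs hx hsx, ?_, ?_, ?_⟩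
    · rw [Finset.card_insert_of_notMem hxs, hscard]
    · rw [Finset.coe_insert]
      exact insert_subset (mem_cell_self x) hsx
    · refine (convex_convexHull ℝ _).segment_subset (subset_convexHull ℝ _ (by simp)) ?_ hpy
      exact convexHull_mono (by simp) hys

lemma exists_mem_cell_freeCoords_eq_univ (hp : p ∈ D.carrier) :
    ∃ z ∈ D.carrier, p ∈ D.cell z ∧ freeCoords (D.level z) z = Finset.univ := by
  set k := D.level p
  set z : EuclideanSpace ℝ ι := WithLp.toLp 2 fun i ↦ (⌊2 ^ k * p i⌋ + 1 / 2) / 2 ^ k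
  have hz (i : ι) : 2 ^ k * z i = ⌊2 ^ k * p i⌋ + 1 / 2 := mul_div_cancel₀ _ (by positivity)
  have hpz : p ∈ dyadicCell k z := fun i ↦ by
    rw [hz, unitCell_intCast_add_half]
    exact ⟨Int.floor_le _, (Int.lt_floor_add_one _).le⟩
  obtain ⟨hzD, hk⟩ := D.coface_mem hp hpz
  refine ⟨z, hzD, antitone_dyadicCell z hk hpz, Finset.univ_subset_iff.1 fun i _ ↦ ?_⟩
  refine antitone_freeCoords z hk (mem_freeCoords.2 ?_)
  rw [hz]
  exact intCast_add_half_notMem_range _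

lemma exists_mem_simplices_of_mem_carrier (hp : p ∈ D.carrier) :
    ∃ s ∈ D.simplices, s.card = Fintype.card ι + 1 ∧ p ∈ convexHull ℝ (s : Set _) := by
  obtain ⟨z, hzD, hpz, hz⟩ := exists_mem_cell_freeCoords_eq_univ hp
  obtain ⟨s, hs, hcard, -, hps⟩ := exists_mem_simplices_of_mem_cell (Fintype.card ι)
    (isVertex_center hzD) (by rw [freeCoords_center hzD, hz, Finset.card_univ])
    (cell_subset_cell_center hzD hpz)
  exact ⟨s, hs, hcard, hps⟩

end Covering

end DyadicSubdivision

section CentroidDist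

lemma centroid_notMem_affineSpan {k V P : Type*} [DivisionRing k] [CharZero k] [AddCommGroup V]
    [Module k V] [AddTorsor V P] {s t : Finset P} (hs : AffineIndependent k ((↑) : s → P))
    (hts : t ⊂ s) : s.centroid k id ∉ affineSpan k (t : Set P) := by
  intro hmem
  obtain ⟨v, hv, hvt⟩ := Finset.exists_of_ssubset hts
  have himage : (t : Set P) = ((↑) : s → P) '' {a | (a : P) ∈ t} := by
    ext u
    simpa using fun hu ↦ hts.1 hu
  have hcard : (s.card : k) ≠ 0 := Nat.cast_ne_zero.2 (Finset.card_ne_zero_of_mem hv)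
  rw [← Finset.centroid_univ, Finset.centroid_def, himage] at hmem
  have hzero := hs.eq_zero_of_affineCombination_mem_affineSpan
    (Finset.sum_centroidWeights_eq_one_of_nonempty k _ ⟨⟨v, hv⟩, Finset.mem_univ _⟩) hmem
    (Finset.mem_univ ⟨v, hv⟩) hvt
  rw [Finset.centroidWeights_apply, Finset.card_univ, Fintype.card_coe] at hzero
  exact inv_ne_zero hcard hzero

variable {E : Type*} [NormedAddCommGroup E] [NormedSpace ℝ E] {s t : Finset E}

/-- The distance from the barycenter of the simplex with vertex set `s` to the affine span of `t`;
the numbers `β(s)` and `B(s)` are its extreme values as `t` ranges over the facets of `s`. -/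
def centroidDist (s t : Finset E) : ℝ :=
  infDist (s.centroid ℝ id) (affineSpan ℝ (t : Set E) : Set E)

lemma centroidDist_pos (hs : AffineIndependent ℝ ((↑) : s → E)) (hts : t ⊂ s) (ht : t.Nonempty) :
    0 < centroidDist s t := by
  have := finiteDimensional_direction_affineSpan_of_finite ℝ t.finite_toSet
  refine ((AffineSubspace.closed_of_finiteDimensional _).notMem_iff_infDist_pos ?_).1
    (centroid_notMem_affineSpan hs hts)
  exact (affineSpan_nonempty ℝ).2 ht

lemma centroidDist_le_diam {σ : Finset E} (hsσ : s ⊆ σ) (hts : t ⊆ s) (ht : t.Nonempty) :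
    centroidDist s t ≤ diam (convexHull ℝ (σ : Set E)) := by
  obtain ⟨v, hv⟩ := ht
  refine (infDist_le_dist_of_mem (mem_affineSpan ℝ hv)).trans (dist_le_diam_of_mem
    (isBounded_convexHull.2 σ.finite_toSet.isBounded) ?_ (subset_convexHull ℝ _ (hsσ (hts hv))))
  exact convexHull_mono (Finset.coe_subset.2 hsσ) (s.centroid_mem_convexHull ⟨v, hts hv⟩)

lemma exists_pos_forall_le_centroidDist {G : Set E} (hG : G.Finite) :
    ∃ κ > 0, ∀ s t : Finset E, (s : Set E) ⊆ G → AffineIndependent ℝ ((↑) : s → E) → t ⊂ s →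
      t.Nonempty → κ ≤ centroidDist s t := by
  set P : Set (Finset E × Finset E) := {q | (q.1 : Set E) ⊆ G ∧
    AffineIndependent ℝ ((↑) : q.1 → E) ∧ q.2 ⊂ q.1 ∧ q.2.Nonempty}
  have hP : P.Finite := by
    refine (hG.toFinset.powerset ×ˢ hG.toFinset.powerset).finite_toSet.subset fun q hq ↦ ?_
    have hqG : q.1 ⊆ hG.toFinset := hG.subset_toFinset.2 hq.1
    exact Finset.mem_product.2 ⟨Finset.mem_powerset.2 hqG,
      Finset.mem_powerset.2 (hq.2.2.1.1.trans hqG)⟩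
  have hev : ∀ᶠ κ in nhdsWithin (0 : ℝ) (Ioi 0), ∀ q ∈ P, κ ≤ centroidDist q.1 q.2 := by
    refine (Filter.eventually_all_finite hP).2 fun q hq ↦ ?_
    filter_upwards [Ioc_mem_nhdsGT (centroidDist_pos hq.2.1 hq.2.2.1 hq.2.2.2)] with κ hκ
    exact hκ.2
  obtain ⟨κ, hκ, hκ0⟩ := (hev.and self_mem_nhdsWithin).exists
  exact ⟨κ, hκ0, fun s t hs hi hts ht ↦ hκ (s, t) ⟨hs, hi, hts, ht⟩⟩

/-- The similarity of ratio `a` that sends `c` to the origin. -/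
def rescale {a : ℝ} (ha : a ≠ 0) (c : E) : E ≃ᵃ[ℝ] E :=
  (AffineEquiv.vaddConst ℝ c).symm.trans (LinearEquiv.smulOfNeZero ℝ E a ha).toAffineEquiv

lemma rescale_apply {a : ℝ} (ha : a ≠ 0) (c v : E) : rescale ha c v = a • (v - c) := rfl

open scoped Pointwise in
lemma infDist_rescale {a : ℝ} (ha : a ≠ 0) (c x : E) (S : Set E) :
    infDist (rescale ha c x) (rescale ha c '' S) = |a| * infDist x S := by
  have himage : rescale ha c '' S = a • ((· - c) '' S) := by
    rw [← image_smul, image_image]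
    rfl
  rw [himage, rescale_apply, infDist_smul₀ ha, Real.norm_eq_abs]
  exact congrArg _ (infDist_image (IsometryEquiv.subRight c).isometry)

lemma centroidDist_rescale {a : ℝ} (ha : a ≠ 0) (c : E) (hs : s.Nonempty) :
    centroidDist (s.map (rescale ha c).toEquiv.toEmbedding)
      (t.map (rescale ha c).toEquiv.toEmbedding) = |a| * centroidDist s t := by
  have hcentroid : (s.map (rescale ha c).toEquiv.toEmbedding).centroid ℝ id
      = rescale ha c (s.centroid ℝ id) := by
    rw [Finset.centroid_map, Finset.centroid_def, Finset.centroid_def]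
    exact (Finset.map_affineCombination s id _
      (s.sum_centroidWeights_eq_one_of_nonempty ℝ hs) (rescale ha c).toAffineMap).symm
  have hspan : (affineSpan ℝ (rescale ha c '' (t : Set E)) : Set E)
      = rescale ha c '' (affineSpan ℝ (t : Set E) : Set E) := by
    exact congrArg _ (AffineSubspace.map_span (rescale ha c).toAffineMap _).symm
  rw [centroidDist, hcentroid, Finset.coe_map]
  exact (congrArg _ hspan).trans (infDist_rescale ha c _ _)

/-- Affinely independent subsets of a similar copy of a finite set `G` form finitely many similarity
classes, so their shape cannot degenerate. -/
lemma exists_pos_forall_le_mul_centroidDist {G : Set E} (hG : G.Finite) :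
    ∃ κ > 0, ∀ (a : ℝ) (c : E) (s t : Finset E), 0 < a → (∀ v ∈ s, a • (v - c) ∈ G) →
      AffineIndependent ℝ ((↑) : s → E) → t ⊂ s → t.Nonempty → κ ≤ a * centroidDist s t := by
  obtain ⟨κ, hκ, h⟩ := exists_pos_forall_le_centroidDist hG
  refine ⟨κ, hκ, fun a c s t ha hsG hs hts ht ↦ ?_⟩
  rw [← abs_of_pos ha, ← centroidDist_rescale ha.ne' c (ht.mono hts.1)]
  have hcoe : (s.map (rescale ha.ne' c).toEquiv.toEmbedding : Set E) = rescale ha.ne' c '' s :=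
    Finset.coe_map _ _
  refine h _ _ (hcoe.trans_subset (image_subset_iff.2 hsG)) ?_ (Finset.map_ssubset_map.2 hts) ht.map
  have hindep := (AffineEquiv.affineIndependent_set_of_eq_iff (rescale ha.ne' c)).2 hs
  rwa [← hcoe] at hindep

end CentroidDist

/-- The points of the integer lattice in the cube `[-2, 2]^ι`. -/
def latticeBox (ι : Type*) : Set (EuclideanSpace ℝ ι) :=
  {x | ∀ i, ∃ z ∈ Icc (-2 : ℤ) 2, x i = z}

lemma finite_latticeBox {ι : Type*} [Finite ι] : (latticeBox ι).Finite := by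
  have hfin : {z : ι → ℤ | ∀ i, z i ∈ Icc (-2) 2}.Finite := Finite.pi' fun _ ↦ finite_Icc _ _
  refine (hfin.image fun z ↦ WithLp.toLp 2 fun i ↦ (z i : ℝ)).subset fun x hx ↦ ?_
  choose z hz hxz using hx
  exact ⟨z, hz, by ext i; exact (hxz i).symm⟩

namespace DyadicSubdivision

section Shape

variable {ι : Type*} {D : DyadicSubdivision ι} {s : Finset (EuclideanSpace ℝ ι)}
  {x v : EuclideanSpace ℝ ι}

/-- A graded subdivision: the levels of a cell and of its faces differ by at most one. This is what
bounds the number of shapes of the simplices of `D.complex`. -/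
def IsGraded (D : DyadicSubdivision ι) : Prop :=
  ∀ ⦃x y⦄, x ∈ D.carrier → y ∈ D.cell x → D.level y ≤ D.level x + 1

lemma IsVertex.exists_two_zpow_mul_eq_intCast (hv : D.IsVertex v) {n : ℤ} (hn : D.level v < n)
    (i : ι) : ∃ z : ℤ, 2 ^ n * v i = z := by
  obtain ⟨M, -, hM⟩ := exists_two_zpow_eq_natCast_mul ℝ (Int.add_one_le_of_lt hn)
  obtain ⟨z, hz⟩ := exists_two_mul_eq_intCast_of_unitCenter_eq (unitCenter_two_zpow_mul hv.2 i)
  refine ⟨M * z, ?_⟩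
  rw [hM, zpow_add_one₀ two_ne_zero]
  push_cast
  rw [← hz]
  ring

lemma IsVertex.abs_sub_le_half (hx : D.IsVertex x) (hv : v ∈ D.cell x) (i : ι) :
    |2 ^ D.level x * v i - 2 ^ D.level x * x i| ≤ 1 / 2 :=
  abs_sub_le_half_of_unitCenter_eq (unitCenter_two_zpow_mul hx.2 i) (hv i)

lemma IsVertex.smul_sub_mem_latticeBox (hD : D.IsGraded) (hx : D.IsVertex x) (hv : D.IsVertex v)
    (hvx : v ∈ D.cell x) : (2 : ℝ) ^ (D.level x + 2) • (v - x) ∈ latticeBox ι := by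
  intro i
  obtain ⟨a, ha⟩ := hv.exists_two_zpow_mul_eq_intCast (n := D.level x + 2)
    (by linarith [hD hx.1 hvx]) i
  obtain ⟨b, hb⟩ := hx.exists_two_zpow_mul_eq_intCast (n := D.level x + 2) (by omega) i
  have hsub : ((2 : ℝ) ^ (D.level x + 2) • (v - x)) i = (a - b : ℤ) := by
    push_cast
    rw [← ha, ← hb]
    simp [mul_sub]
  have hscale : ((2 : ℝ) ^ (D.level x + 2) • (v - x)) i
      = 4 * (2 ^ D.level x * v i - 2 ^ D.level x * x i) := by
    rw [PiLp.smul_apply, PiLp.sub_apply, smul_eq_mul, zpow_add₀ two_ne_zero]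
    norm_num
    ring
  have habs : |((a - b : ℤ) : ℝ)| ≤ 2 := by
    rw [← hsub, hscale, abs_mul, abs_of_pos (by norm_num : (0 : ℝ) < 4)]
    linarith [hx.abs_sub_le_half hvx i]
  exact ⟨a - b, abs_le.1 (by exact_mod_cast habs), hsub⟩

/-- Up to similarity, the barycentric subdivision of a graded subdivision has finitely many
simplices, so their shape is controlled by a constant depending only on the dimension. -/
lemma exists_pos_forall_mul_le_centroidDist (ι : Type*) [Fintype ι] :
    ∃ κ > 0, ∀ D : DyadicSubdivision ι, D.IsGraded → ∀ s ∈ D.simplices, ∀ x ∈ s,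
      (s : Set _) ⊆ D.cell x → ∀ ω ⊆ s, ∀ t ⊂ ω, t.Nonempty →
        κ * 2 ^ (-D.level x) ≤ centroidDist ω t := by
  obtain ⟨κ, hκ, h⟩ := exists_pos_forall_le_mul_centroidDist (finite_latticeBox (ι := ι))
  refine ⟨κ / 4, by positivity, fun D hD s hs x hx hsx ω hω t ht hne ↦ ?_⟩
  have hωs : ω ∈ D.simplices := (isRelLowerSet_simplices hs).2 hω (hne.mono ht.1)
  have hle := h (2 ^ (D.level x + 2)) x ω t (by positivity)
    (fun v hv ↦ (hs.2.1 x hx).smul_sub_mem_latticeBox hD (hs.2.1 v (hω hv)) (hsx (hω hv)))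
    (D.complex.indep hωs) ht hne
  rw [zpow_add₀ two_ne_zero] at hle
  rw [zpow_neg, ← div_eq_mul_inv, div_le_iff₀ (by positivity)]
  norm_num at hle
  linarith

variable [Fintype ι]

lemma IsVertex.two_zpow_neg_div_two_le_dist (hx : D.IsVertex x) (hv : D.IsVertex v)
    (hvx : v ∈ D.cell x) (hne : v ≠ x) : 2 ^ (-D.level x) / 2 ≤ dist v x := by
  by_contra! hlt
  have hxv : x ∈ dyadicCell (D.level x) v := by
    intro i
    refine center_mem_unitCell_of_abs_sub_lt_half (unitCenter_two_zpow_mul hx.2 i) (hvx i) ?_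
    have hi : |v i - x i| < 2 ^ (-D.level x) / 2 :=
      ((PiLp.norm_apply_le (v - x) i).trans_eq (dist_eq_norm v x).symm).trans_lt hlt
    rw [← mul_sub, abs_mul, abs_of_pos (by positivity), ← lt_div_iff₀' (by positivity)]
    rwa [zpow_neg, inv_eq_one_div, div_right_comm] at hi
  have hcenter := center_eq_center hx.1 hvx hxv
  rw [hv.2, hx.2] at hcenter
  exact hne hcenter

lemma diam_convexHull_le_cubeDiam (hsx : (s : Set _) ⊆ D.cell x) :
    diam (convexHull ℝ (s : Set (EuclideanSpace ℝ ι))) ≤ cubeDiam ι (D.level x) := by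
  rw [convexHull_diam]
  exact diam_le_of_forall_dist_le (by unfold cubeDiam; positivity) fun u hu v hv ↦
    dist_le_cubeDiam_of_mem_dyadicCell (hsx hu) (hsx hv)

lemma two_zpow_neg_div_two_le_diam (hs : s ∈ D.simplices) (hcard : 1 < s.card) (hx : x ∈ s)
    (hsx : (s : Set _) ⊆ D.cell x) :
    2 ^ (-D.level x) / 2 ≤ diam (convexHull ℝ (s : Set (EuclideanSpace ℝ ι))) := by
  obtain ⟨v, hv, hne⟩ := Finset.exists_mem_ne hcard x
  rw [convexHull_diam]
  exact ((hs.2.1 x hx).two_zpow_neg_div_two_le_dist (hs.2.1 v hv) (hsx hv) hne).trans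
    (dist_le_diam_of_mem s.finite_toSet.isBounded hv hx)

end Shape

end DyadicSubdivision

section WhitneyLevel

variable {ι : Type*} [Fintype ι] {Z : Set (EuclideanSpace ℝ ι)} {k n : ℤ}
  {x y : EuclideanSpace ℝ ι}

/-- `IsFar Z k x` says that the star of `x` in the grid of mesh `2⁻ᵏ` keeps at least the diameter of
a grid cube away from `Z`. Testing the whole star rather than one cube is what makes the resulting
levels monotone along faces. -/
def IsFar (Z : Set (EuclideanSpace ℝ ι)) (k : ℤ) (x : EuclideanSpace ℝ ι) : Prop :=
  ∀ p ∈ dyadicStar k x, cubeDiam ι k ≤ infDist p Z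

/-- The level of the Whitney decomposition at `x`: the coarsest grid for which `x` is far from `Z`.
This is a junk value if `x ∈ Z` or `Z` is empty. -/
def whitneyLevel (Z : Set (EuclideanSpace ℝ ι)) (x : EuclideanSpace ℝ ι) : ℤ :=
  sInf {k | IsFar Z k x}

lemma IsFar.mono (h : IsFar Z k x) (hkn : k ≤ n) : IsFar Z n x :=
  fun p hp ↦ (antitone_cubeDiam hkn).trans (h p (antitone_dyadicStar x hkn hp))

lemma IsFar.of_mem_dyadicCell (h : IsFar Z k y) (hy : y ∈ dyadicCell k x) : IsFar Z k x :=
  fun p hp ↦ h p (dyadicStar_subset_dyadicStar hy hp)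

lemma IsFar.cubeDiam_le_infDist (h : IsFar Z k x) (hy : y ∈ dyadicCell k x) :
    cubeDiam ι k ≤ infDist y Z :=
  h y (dyadicCell_subset_dyadicStar (mem_dyadicCell_self k x) hy)

lemma isFar_add_one (h : cubeDiam ι k ≤ infDist x Z) : IsFar Z (k + 1) x := by
  intro p hp
  have hdist := dist_le_cubeDiam_of_mem_dyadicStar hp
  have hinf : infDist x Z ≤ infDist p Z + dist x p := infDist_le_infDist_add_dist
  rw [cubeDiam_add_one] at hdist ⊢
  linarith

variable [Nonempty ι]

lemma IsFar.notMem (h : IsFar Z k x) (hy : y ∈ dyadicCell k x) : y ∉ Z := fun hyZ ↦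
  ((cubeDiam_pos k).trans_le (h.cubeDiam_le_infDist hy)).ne' (infDist_zero_of_mem hyZ)

lemma isFar_iff_whitneyLevel_le (hZ : IsClosed Z) (hne : Z.Nonempty) (hx : x ∉ Z) :
    IsFar Z k x ↔ whitneyLevel Z x ≤ k := by
  obtain ⟨n, hle, hlt⟩ :=
    exists_cubeDiam_le_lt (ι := ι) ((hZ.notMem_iff_infDist_pos hne).1 hx)
  have hbdd : BddBelow {k | IsFar Z k x} := ⟨n, fun j hj ↦
    (antitone_cubeDiam.reflect_lt
      ((hj.cubeDiam_le_infDist (mem_dyadicCell_self j x)).trans_lt hlt)).le⟩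
  have hmem : IsFar Z (whitneyLevel Z x) x := Int.csInf_mem ⟨_, isFar_add_one hle⟩ hbdd
  exact ⟨fun h ↦ csInf_le hbdd h, hmem.mono⟩

/-- The Whitney decomposition of the complement of `Z`. -/
def whitneySubdivision (hZ : IsClosed Z) (hne : Z.Nonempty) : DyadicSubdivision ι where
  carrier := Zᶜ
  level := whitneyLevel Z
  face_mem {x y} hx hy := by
    have hyZ := ((isFar_iff_whitneyLevel_le hZ hne hx).2 le_rfl).notMem hy
    refine ⟨hyZ, le_of_not_gt fun hlt ↦ hlt.not_ge ?_⟩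
    exact (isFar_iff_whitneyLevel_le hZ hne hx).1 <|
      ((isFar_iff_whitneyLevel_le hZ hne hyZ).2 le_rfl).of_mem_dyadicCell
        (antitone_dyadicCell x hlt.le hy)
  coface_mem {x y} hy hyx := by
    have hfar := ((isFar_iff_whitneyLevel_le hZ hne hy).2 le_rfl).of_mem_dyadicCell hyx
    have hxZ := hfar.notMem (mem_dyadicCell_self _ x)
    exact ⟨hxZ, (isFar_iff_whitneyLevel_le hZ hne hxZ).1 hfar⟩

variable (hZ : IsClosed Z) (hne : Z.Nonempty)

lemma cubeDiam_le_infDist_of_mem_cell (hx : x ∉ Z) (hy : y ∈ (whitneySubdivision hZ hne).cell x) :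
    cubeDiam ι ((whitneySubdivision hZ hne).level x) ≤ infDist y Z :=
  ((isFar_iff_whitneyLevel_le hZ hne hx).2 le_rfl).cubeDiam_le_infDist hy

lemma isGraded_whitneySubdivision : (whitneySubdivision hZ hne).IsGraded := fun _ _ hx hy ↦
  (isFar_iff_whitneyLevel_le hZ hne (DyadicSubdivision.cell_subset_carrier hx hy)).1 <|
    isFar_add_one (cubeDiam_le_infDist_of_mem_cell hZ hne hx hy)

lemma infDist_le_four_mul_cubeDiam (hx : x ∉ Z) :
    infDist x Z ≤ 4 * cubeDiam ι ((whitneySubdivision hZ hne).level x) := by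
  by_contra! hlt
  set k := (whitneySubdivision hZ hne).level x - 2
  have hdiam : 4 * cubeDiam ι ((whitneySubdivision hZ hne).level x) = cubeDiam ι k := by
    rw [show (whitneySubdivision hZ hne).level x = k + 1 + 1 by omega, cubeDiam_add_one,
      cubeDiam_add_one]
    ring
  have hlevel : (whitneySubdivision hZ hne).level x ≤ k + 1 :=
    (isFar_iff_whitneyLevel_le hZ hne hx).1 (isFar_add_one (hdiam ▸ hlt.le))
  omega

end WhitneyLevel

section BetaBounds

variable {m : ℕ} {ω σ : Finset (Euc m)} {a b : ℝ}

lemma sInf_mem_Icc {S : Set ℝ} (hne : S.Nonempty) (hS : S ⊆ Icc a b) : sInf S ∈ Icc a b :=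
  isClosed_Icc.closure_subset_iff.2 hS (csInf_mem_closure hne (bddBelow_Icc.mono hS))

lemma sSup_mem_Icc {S : Set ℝ} (hne : S.Nonempty) (hS : S ⊆ Icc a b) : sSup S ∈ Icc a b :=
  isClosed_Icc.closure_subset_iff.2 hS (csSup_mem_closure hne (bddAbove_Icc.mono hS))

lemma faceBetaMin_faceBetaMax_mem_Icc
    (h : ∀ t ⊆ ω, t.card = ω.card - 1 → centroidDist ω t ∈ Icc a b) :
    faceBetaMin m ω ∈ Icc a b ∧ faceBetaMax m ω ∈ Icc a b ∧ faceBetaMin m ω ≤ faceBetaMax m ω := by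
  obtain ⟨t, ht, hcard⟩ := Finset.exists_subset_card_eq (Nat.sub_le ω.card 1)
  have hsub : {d | ∃ t ⊆ ω, t.card = ω.card - 1 ∧ d = centroidDist ω t} ⊆ Icc a b := by
    rintro _ ⟨t, ht, hcard, rfl⟩
    exact h t ht hcard
  exact ⟨sInf_mem_Icc ⟨_, t, ht, hcard, rfl⟩ hsub, sSup_mem_Icc ⟨_, t, ht, hcard, rfl⟩ hsub,
    Real.sInf_le_sSup _ (bddBelow_Icc.mono hsub) (bddAbove_Icc.mono hsub)⟩

lemma betaLow_betaHigh_mem_Icc (hσ : 2 ≤ σ.card)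
    (h : ∀ ω ⊆ σ, 2 ≤ ω.card → ∀ t ⊆ ω, t.card = ω.card - 1 → centroidDist ω t ∈ Icc a b) :
    betaLow m σ ∈ Icc a b ∧ betaHigh m σ ∈ Icc a b ∧ betaLow m σ ≤ betaHigh m σ := by
  have hmin : {c | ∃ ω ⊆ σ, 2 ≤ ω.card ∧ c = faceBetaMin m ω} ⊆ Icc a b := by
    rintro _ ⟨ω, hω, hcard, rfl⟩
    exact (faceBetaMin_faceBetaMax_mem_Icc (h ω hω hcard)).1
  have hmax : {c | ∃ ω ⊆ σ, 2 ≤ ω.card ∧ c = faceBetaMax m ω} ⊆ Icc a b := by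
    rintro _ ⟨ω, hω, hcard, rfl⟩
    exact (faceBetaMin_faceBetaMax_mem_Icc (h ω hω hcard)).2.1
  refine ⟨sInf_mem_Icc ⟨_, σ, subset_rfl, hσ, rfl⟩ hmin,
    sSup_mem_Icc ⟨_, σ, subset_rfl, hσ, rfl⟩ hmax, ?_⟩
  calc betaLow m σ
    _ ≤ faceBetaMin m σ := csInf_le (bddBelow_Icc.mono hmin) ⟨σ, subset_rfl, hσ, rfl⟩
    _ ≤ faceBetaMax m σ := (faceBetaMin_faceBetaMax_mem_Icc (h σ subset_rfl hσ)).2.2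
    _ ≤ betaHigh m σ := le_csSup (bddAbove_Icc.mono hmax) ⟨σ, subset_rfl, hσ, rfl⟩

end BetaBounds

section SetDist

variable {m : ℕ} {A Z : Set (Euc m)} {x : Euc m} {c : ℝ}

lemma le_setDist (hA : A.Nonempty) (hZ : Z.Nonempty) (h : ∀ x ∈ A, c ≤ infDist x Z) :
    c ≤ setDist m A Z := by
  refine le_csInf (hA.image2 hZ) ?_
  rintro _ ⟨x, hx, z, hz, rfl⟩
  exact (h x hx).trans (infDist_le_dist_of_mem hz)

lemma setDist_le_infDist (hx : x ∈ A) (hZ : Z.Nonempty) : setDist m A Z ≤ infDist x Z := by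
  refine (le_infDist hZ).2 fun z hz ↦ csInf_le ⟨0, ?_⟩ (mem_image2_of_mem hx hz)
  rintro _ ⟨_, _, _, _, rfl⟩
  exact dist_nonneg

end SetDist

section Whitney

variable {m : ℕ}

lemma card_le_add_one_of_mem_faces (K : Geometry.SimplicialComplex ℝ (Euc m)) {s : Finset (Euc m)}
    (hs : s ∈ K.faces) : s.card ≤ m + 1 := by
  have hcard := (K.indep hs).card_le_finrank_succ
  have hrank := Submodule.finrank_le (vectorSpan ℝ (range ((↑) : s → Euc m)))
  rw [finrank_euclideanSpace_fin] at hrank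
  rw [Fintype.card_coe] at hcard
  omega

lemma skel_complex (D : DyadicSubdivision (Fin m)) : skel m D.complex m = D.carrier := by
  refine (iUnion₂_subset fun s hs ↦ D.convexHull_subset_carrier hs.1).antisymm fun p hp ↦ ?_
  obtain ⟨s, hs, hcard, hps⟩ := D.exists_mem_simplices_of_mem_carrier hp
  exact mem_biUnion ⟨hs, hcard.trans (by rw [Fintype.card_fin])⟩ hps

lemma exists_pos_forall_simpDiam_div_bounds (m : ℕ) :
    ∃ κ > 0, ∀ D : DyadicSubdivision (Fin m), D.IsGraded → ∀ σ ∈ D.simplices, 1 < σ.card →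
      1 ≤ simpDiam m σ / betaHigh m σ ∧
      simpDiam m σ / betaHigh m σ ≤ simpDiam m σ / betaLow m σ ∧
      simpDiam m σ / betaLow m σ ≤ √m / κ := by
  obtain ⟨κ, hκ, h⟩ := DyadicSubdivision.exists_pos_forall_mul_le_centroidDist (Fin m)
  refine ⟨κ, hκ, fun D hD σ hσ hcard ↦ ?_⟩
  obtain ⟨x, hx, hσx⟩ := D.exists_subset_cell hσ
  set r : ℝ := 2 ^ (-D.level x)
  have hr_pos : 0 < r := by positivity
  have hdiam : simpDiam m σ ≤ √m * r :=
    (DyadicSubdivision.diam_convexHull_le_cubeDiam hσx).trans_eq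
      (by rw [cubeDiam, Fintype.card_fin])
  obtain ⟨⟨hlow, -⟩, ⟨-, hhigh⟩, hle⟩ := betaLow_betaHigh_mem_Icc (a := κ * r) (b := simpDiam m σ)
    hcard fun ω hω hω2 t ht htcard ↦ by
      have htne : t.Nonempty := Finset.card_pos.1 (by omega)
      have htω : t ⊂ ω := ht.ssubset_of_ne (by rintro rfl; omega)
      exact ⟨h D hD σ hσ x hx hσx ω hω t htω htne, centroidDist_le_diam hω ht htne⟩
  have hlow_pos : 0 < betaLow m σ := (by positivity : 0 < κ * r).trans_le hlow
  have hhigh_pos : 0 < betaHigh m σ := hlow_pos.trans_le hle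
  refine ⟨(one_le_div hhigh_pos).2 hhigh, ?_, ?_⟩
  · exact div_le_div_of_nonneg_left diam_nonneg hlow_pos hle
  · calc simpDiam m σ / betaLow m σ
      _ ≤ √m * r / (κ * r) := by gcongr
      _ = √m / κ := mul_div_mul_right _ _ hr_pos.ne'

lemma simpDiam_setDist_bounds [NeZero m] {Z : Set (Euc m)} (hZ : IsClosed Z) (hne : Z.Nonempty)
    {σ : Finset (Euc m)} (hσ : σ ∈ (whitneySubdivision hZ hne).simplices) (hcard : 1 < σ.card) :
    simpDiam m σ ≤ setDist m (convexHull ℝ (σ : Set (Euc m))) Z ∧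
      setDist m (convexHull ℝ (σ : Set (Euc m))) Z ≤ 8 * √m * simpDiam m σ := by
  set D := whitneySubdivision hZ hne
  obtain ⟨x, hx, hσx⟩ := DyadicSubdivision.exists_subset_cell hσ
  have hxZ : x ∉ Z := (hσ.2.1 x hx).1
  have hxσ : x ∈ convexHull ℝ (σ : Set (Euc m)) := subset_convexHull ℝ _ hx
  constructor
  · calc simpDiam m σ
      _ ≤ cubeDiam (Fin m) (D.level x) := DyadicSubdivision.diam_convexHull_le_cubeDiam hσx
      _ ≤ setDist m (convexHull ℝ (σ : Set (Euc m))) Z := le_setDist ⟨x, hxσ⟩ hne fun p hp ↦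
        cubeDiam_le_infDist_of_mem_cell hZ hne hxZ
          (convexHull_min hσx (DyadicSubdivision.convex_cell x) hp)
  · calc setDist m (convexHull ℝ (σ : Set (Euc m))) Z
      _ ≤ infDist x Z := setDist_le_infDist hxσ hne
      _ ≤ 4 * cubeDiam (Fin m) (D.level x) := infDist_le_four_mul_cubeDiam hZ hne hxZ
      _ = 8 * √m * (2 ^ (-D.level x) / 2) := by rw [cubeDiam, Fintype.card_fin]; ring
      _ ≤ 8 * √m * simpDiam m σ := by
        gcongr
        exact DyadicSubdivision.two_zpow_neg_div_two_le_diam hσ hcard hx hσx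

end Whitney

end WhitneyTriangulation

/-- **Lemma (Whitney triangulation).**
For every `m ≥ 1` there are `D₁, D₂ > 0` depending only on `m` such that every nonempty
proper closed subset `Z ⊊ ℝ^m` admits an `m`-dimensional simplicial complex `Σ` with
`Σ^{(m)} = ℝ^m ∖ Z` whose `m`-simplices `σ` satisfy
`diam σ ≤ dist(σ,Z) ≤ 12√m · diam σ` and `D₁ < diam σ / B_σ ≤ diam σ / β_σ < D₂`. -/
theorem whitney_triangulation (m : ℕ) (hm : 1 ≤ m) :
    ∃ D₁ D₂ : ℝ, 0 < D₁ ∧ 0 < D₂ ∧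
      ∀ Z : Set (Euc m), IsClosed Z → Z.Nonempty → Z ≠ Set.univ →
        ∃ K : Geometry.SimplicialComplex ℝ (Euc m), WhitneyConclusions m D₁ D₂ Z K := by
  obtain ⟨κ, hκ, hshape⟩ := WhitneyTriangulation.exists_pos_forall_simpDiam_div_bounds m
  refine ⟨1 / 2, √m / κ + 1, by positivity, by positivity, fun Z hZ hne _ ↦ ?_⟩
  have : NeZero m := NeZero.of_pos hm
  set D := WhitneyTriangulation.whitneySubdivision hZ hne
  refine ⟨D.complex, fun s ↦ WhitneyTriangulation.card_le_add_one_of_mem_faces _,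
    WhitneyTriangulation.skel_complex D, fun σ hσ hcard ↦ ?_⟩
  obtain ⟨hdiam_le, hle_diam⟩ :=
    WhitneyTriangulation.simpDiam_setDist_bounds hZ hne hσ (by omega)
  obtain ⟨hhigh, hle, hlow⟩ :=
    hshape D (WhitneyTriangulation.isGraded_whitneySubdivision hZ hne) σ hσ (by omega)
  have hconst : 8 * √m * simpDiam m σ ≤ 12 * √m * simpDiam m σ := by
    gcongr
    · exact diam_nonneg
    · norm_num
  exact ⟨hdiam_le, hle_diam.trans hconst, by linarith, hle, by linarith⟩

end
end

section
/- For every integer m ≥ 1 there are constants D₁, D₂ > 0 and an integer N ≥ 1, all depending only on m, such that for every nonempty closed set Z ⊊ ℝ^m there exists an m-dimensional simplicial complex Σ in ℝ^m with Σ^{(m)} = ℝ^m ∖ Z satisfying: (i) every m-simplex σ ∈ Σ satisfies diam(σ) ≤ dist(σ,Z) ≤ 12√m·diam(σ) and D₁ < diam(σ)/B_σ ≤ diam(σ)/β_σ < D₂; and (ii) the simplices of Σ fall into at most N equivalence classes, where two simplices are equivalent if one can be obtained from the other by a composition of a rotation, a translation and a homothetic dilation. -/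
open MeasureTheory Metric Set
noncomputable section

/-- Two simplices (given by vertex sets `s`, `t`) are equivalent if one is obtained from
the other by a composition of a rotation, a translation and a homothetic dilation. -/
def SimplexEquiv (m : ℕ) (s t : Finset (Euc m)) : Prop :=
  ∃ (r : ℝ) (R : Euc m ≃ₗᵢ[ℝ] Euc m) (b : Euc m), 0 < r ∧
    LinearMap.det (R.toLinearEquiv : Euc m →ₗ[ℝ] Euc m) = 1 ∧
    (t : Set (Euc m)) = (fun x => r • R x + b) '' (s : Set (Euc m))

/-!
Give every point `x ∉ Z` the largest scale `j` for which the dyadic cubes of side `2 ^ j` around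
the open dyadic cell of scale `j` through `x` are at distance at least their diameter from `Z`.
Maximality forces the cell of every nearby point to be compatible with the cell of `x`: the open
cells chosen in this way partition `ℝ^m ∖ Z`, the closure of a cell is a union of such cells of the
same or a smaller scale, and the scale drops by at most one. A face of a cube adjacent to smaller
cubes is thereby already subdivided by them.

Flags of nested cells, with a cell represented by its barycentre, therefore span a triangulation.
A simplex is the cone from the barycentre of its largest cell over a simplex in the boundary of
that cell, which gives by induction affine independence, compatibility of intersections, and the
covering property. If the largest cell has scale `j`, then the barycentres are points of
`2 ^ (j - 2) ℤ ^ m` at sup-distance at most `2 ^ j / 2` from the one of the largest cell, so up to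
similarity every simplex has its vertices in `{-2, …, 2} ^ m`. There are finitely many such
simplices, and `diam σ / β_σ` is a similarity invariant, whence `D₂`; that `D₁ = 1 / 2` works is
just `B_σ ≤ diam σ`.
-/

section DyadicIntervals

/-- The grid `2 ^ j ℤ`, the set of endpoints of the dyadic intervals of length `2 ^ j`. -/
def dyadicGrid (j : ℤ) : AddSubgroup ℝ := AddSubgroup.zmultiples ((2 : ℝ) ^ j)

/-- The largest point of `2 ^ j ℤ` below `t`. Together with `dyadicCeil j t` it bounds the
smallest dyadic interval of scale `j` containing `t`, which is `{t}` when `t` is a grid point. -/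
def dyadicFloor (j : ℤ) (t : ℝ) : ℝ := 2 ^ j * ⌊t / 2 ^ j⌋

/-- The smallest point of `2 ^ j ℤ` above `t`; see `dyadicFloor`. -/
def dyadicCeil (j : ℤ) (t : ℝ) : ℝ := 2 ^ j * ⌈t / 2 ^ j⌉

variable {j k : ℤ} {t u v : ℝ}

lemma two_zpow_pos (j : ℤ) : (0 : ℝ) < 2 ^ j := by positivity

lemma mem_dyadicGrid : u ∈ dyadicGrid j ↔ ∃ n : ℤ, 2 ^ j * (n : ℝ) = u := by
  simp [dyadicGrid, AddSubgroup.mem_zmultiples_iff, mul_comm]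

lemma dyadicGrid_antitone : Antitone dyadicGrid := by
  intro k j hkj
  obtain ⟨n, rfl⟩ := Int.le.dest hkj
  refine AddSubgroup.zmultiples_le_of_mem (mem_dyadicGrid.2 ⟨2 ^ n, ?_⟩)
  rw [zpow_add₀ two_ne_zero]
  simp

lemma two_zpow_mem_dyadicGrid (j : ℤ) : (2 : ℝ) ^ j ∈ dyadicGrid j := AddSubgroup.mem_zmultiples _

lemma two_zpow_mul_mem_dyadicGrid (hu : u ∈ dyadicGrid j) (k : ℤ) :
    2 ^ k * u ∈ dyadicGrid (k + j) := by
  obtain ⟨n, rfl⟩ := mem_dyadicGrid.1 hu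
  exact mem_dyadicGrid.2 ⟨n, by rw [zpow_add₀ two_ne_zero, mul_assoc]⟩

lemma dyadicFloor_mem (j : ℤ) (t : ℝ) : dyadicFloor j t ∈ dyadicGrid j := mem_dyadicGrid.2 ⟨_, rfl⟩

lemma dyadicCeil_mem (j : ℤ) (t : ℝ) : dyadicCeil j t ∈ dyadicGrid j := mem_dyadicGrid.2 ⟨_, rfl⟩

lemma dyadicFloor_neg (j : ℤ) (t : ℝ) : dyadicFloor j (-t) = -dyadicCeil j t := by
  simp [dyadicFloor, dyadicCeil, neg_div, Int.floor_neg]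

lemma add_two_zpow_le_of_lt (hu : u ∈ dyadicGrid j) (hv : v ∈ dyadicGrid j) (huv : u < v) :
    u + 2 ^ j ≤ v := by
  obtain ⟨a, rfl⟩ := mem_dyadicGrid.1 hu
  obtain ⟨b, rfl⟩ := mem_dyadicGrid.1 hv
  have hab : a + 1 ≤ b := by exact_mod_cast lt_of_mul_lt_mul_left huv (two_zpow_pos j).le
  calc (2 : ℝ) ^ j * a + 2 ^ j = 2 ^ j * (a + 1 : ℤ) := by push_cast; ring
    _ ≤ 2 ^ j * b := by gcongr

lemma dyadicFloor_le (j : ℤ) (t : ℝ) : dyadicFloor j t ≤ t :=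
  (le_div_iff₀' (two_zpow_pos j)).1 (Int.floor_le _)

lemma lt_dyadicFloor_add (j : ℤ) (t : ℝ) : t < dyadicFloor j t + 2 ^ j := by
  have h := (div_lt_iff₀' (two_zpow_pos j)).1 (Int.lt_floor_add_one (t / 2 ^ j))
  rwa [mul_add, mul_one] at h

lemma le_dyadicCeil (j : ℤ) (t : ℝ) : t ≤ dyadicCeil j t := by
  linarith [dyadicFloor_le j (-t), dyadicFloor_neg j t]

lemma le_dyadicFloor (hu : u ∈ dyadicGrid j) : u ≤ dyadicFloor j t ↔ u ≤ t := by
  refine ⟨fun h => h.trans (dyadicFloor_le j t), fun h => not_lt.1 fun hlt => ?_⟩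
  linarith [add_two_zpow_le_of_lt (dyadicFloor_mem j t) hu hlt, lt_dyadicFloor_add j t]

lemma dyadicCeil_le (hu : u ∈ dyadicGrid j) : dyadicCeil j t ≤ u ↔ t ≤ u := by
  rw [← neg_le_neg_iff, ← dyadicFloor_neg, le_dyadicFloor (neg_mem hu), neg_le_neg_iff]

lemma dyadicCeil_le_dyadicFloor_add (j : ℤ) (t : ℝ) : dyadicCeil j t ≤ dyadicFloor j t + 2 ^ j :=
  (dyadicCeil_le (add_mem (dyadicFloor_mem j t) (two_zpow_mem_dyadicGrid _))).2
    (lt_dyadicFloor_add j t).le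

lemma dyadicFloor_of_mem (hu : u ∈ dyadicGrid j) : dyadicFloor j u = u :=
  (dyadicFloor_le j u).antisymm ((le_dyadicFloor hu).2 le_rfl)

lemma dyadicCeil_of_mem (hu : u ∈ dyadicGrid j) : dyadicCeil j u = u :=
  ((dyadicCeil_le hu).2 le_rfl).antisymm (le_dyadicCeil j u)

lemma dyadicCeil_eq_add_of_notMem (ht : t ∉ dyadicGrid j) :
    dyadicCeil j t = dyadicFloor j t + 2 ^ j := by
  have hlt : dyadicFloor j t < t :=
    (dyadicFloor_le j t).lt_of_ne fun h => ht (h ▸ dyadicFloor_mem j t)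
  exact (dyadicCeil_le_dyadicFloor_add j t).antisymm (add_two_zpow_le_of_lt
    (dyadicFloor_mem j t) (dyadicCeil_mem j t) (hlt.trans_le (le_dyadicCeil j t)))

lemma dyadicFloor_eq (hu : u ∈ dyadicGrid j) (hut : u ≤ t) (htu : t < u + 2 ^ j) :
    dyadicFloor j t = u := by
  refine le_antisymm (not_lt.1 fun hlt => ?_) ((le_dyadicFloor hu).2 hut)
  linarith [add_two_zpow_le_of_lt hu (dyadicFloor_mem j t) hlt, dyadicFloor_le j t]

lemma dyadicCeil_eq (hu : u ∈ dyadicGrid j) (hut : u < t) (htu : t ≤ u + 2 ^ j) :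
    dyadicCeil j t = u + 2 ^ j := by
  have h := dyadicFloor_eq (t := -t)
    (neg_mem (add_mem hu (two_zpow_mem_dyadicGrid _))) (by linarith) (by linarith)
  linarith [dyadicFloor_neg j t]

lemma dyadicFloor_midpoint (j : ℤ) (t : ℝ) :
    dyadicFloor j ((dyadicFloor j t + dyadicCeil j t) / 2) = dyadicFloor j t := by
  have h := two_zpow_pos j
  refine dyadicFloor_eq (dyadicFloor_mem j t) ?_ ?_
  · linarith [dyadicFloor_le j t, le_dyadicCeil j t]
  · linarith [dyadicCeil_le_dyadicFloor_add j t]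

lemma dyadicCeil_midpoint (j : ℤ) (t : ℝ) :
    dyadicCeil j ((dyadicFloor j t + dyadicCeil j t) / 2) = dyadicCeil j t := by
  by_cases ht : t ∈ dyadicGrid j
  · rw [dyadicFloor_of_mem ht, dyadicCeil_of_mem ht, add_self_div_two, dyadicCeil_of_mem ht]
  · have h := two_zpow_pos j
    rw [dyadicCeil_eq_add_of_notMem ht]
    exact dyadicCeil_eq (dyadicFloor_mem j t) (by linarith) (by linarith)

lemma midpoint_mem_dyadicGrid_iff :
    (dyadicFloor j t + dyadicCeil j t) / 2 ∈ dyadicGrid j ↔ t ∈ dyadicGrid j := by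
  refine ⟨fun h => by_contra fun ht => ?_, fun ht => ?_⟩
  · have hfloor := dyadicFloor_of_mem h
    rw [dyadicFloor_midpoint, dyadicCeil_eq_add_of_notMem ht] at hfloor
    linarith [two_zpow_pos j]
  · rwa [dyadicFloor_of_mem ht, dyadicCeil_of_mem ht, add_self_div_two]

lemma exists_notMem_dyadicGrid_mem_Icc (hu : u ∈ dyadicGrid k) (hv : v ∈ dyadicGrid k)
    (huv : u < v) (ht : t ∈ Icc u v) :
    ∃ s ∈ Icc u v, s ∉ dyadicGrid k ∧ t ∈ Icc (dyadicFloor k s) (dyadicCeil k s) := by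
  have hpos := two_zpow_pos k
  obtain ⟨w, hw, hwt, huw, hwv⟩ : ∃ w ∈ dyadicGrid k, t ∈ Icc w (w + 2 ^ k) ∧ u ≤ w ∧
      w + 2 ^ k ≤ v := by
    rcases ht.2.lt_or_eq with htv | rfl
    · exact ⟨dyadicFloor k t, dyadicFloor_mem k t,
        ⟨dyadicFloor_le k t, (lt_dyadicFloor_add k t).le⟩, (le_dyadicFloor hu).2 ht.1,
        add_two_zpow_le_of_lt (dyadicFloor_mem k t) hv ((dyadicFloor_le k t).trans_lt htv)⟩
    · have hgap := add_two_zpow_le_of_lt hu hv huv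
      exact ⟨t - 2 ^ k, sub_mem hv (two_zpow_mem_dyadicGrid _), ⟨by linarith, by linarith⟩,
        by linarith, by linarith⟩
  have hfloor : dyadicFloor k (w + 2 ^ k / 2) = w := dyadicFloor_eq hw (by linarith) (by linarith)
  have hceil : dyadicCeil k (w + 2 ^ k / 2) = w + 2 ^ k :=
    dyadicCeil_eq hw (by linarith) (by linarith)
  refine ⟨w + 2 ^ k / 2, ⟨by linarith, by linarith⟩, fun hmem => ?_, by rwa [hfloor, hceil]⟩
  linarith [dyadicFloor_of_mem hmem]

end DyadicIntervals

section DyadicCells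

variable {ι : Type*} {j k : ℤ} {x y d : EuclideanSpace ℝ ι} {i : ι}

/-- The smallest closed dyadic cell of scale `j` (a face of the cubical grid of side `2 ^ j`)
containing `x`. -/
def closedCell (j : ℤ) (x : EuclideanSpace ℝ ι) : Set (EuclideanSpace ℝ ι) :=
  {y | ∀ i, y i ∈ Icc (dyadicFloor j (x i)) (dyadicCeil j (x i))}

/-- The union of the closed dyadic cubes of scale `j` containing `closedCell j x`. -/
def closedStar (j : ℤ) (x : EuclideanSpace ℝ ι) : Set (EuclideanSpace ℝ ι) :=
  {y | ∀ i, y i ∈ Icc (dyadicCeil j (x i) - 2 ^ j) (dyadicFloor j (x i) + 2 ^ j)}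

/-- The barycentre of `closedCell j x`. A cell is encoded by its barycentre `d` together with its
scale, so that `cellCenter j d = d` says that `d` is the barycentre of a cell of scale `j`. -/
def cellCenter (j : ℤ) (x : EuclideanSpace ℝ ι) : EuclideanSpace ℝ ι :=
  WithLp.toLp 2 fun i => (dyadicFloor j (x i) + dyadicCeil j (x i)) / 2

lemma cellCenter_apply (j : ℤ) (x : EuclideanSpace ℝ ι) (i : ι) :
    cellCenter j x i = (dyadicFloor j (x i) + dyadicCeil j (x i)) / 2 := rfl

lemma self_mem_closedCell (j : ℤ) (x : EuclideanSpace ℝ ι) : x ∈ closedCell j x :=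
  fun i => ⟨dyadicFloor_le j (x i), le_dyadicCeil j (x i)⟩

lemma closedCell_subset (hkj : k ≤ j) (hy : y ∈ closedCell j x) :
    closedCell k y ⊆ closedCell j x := fun _ hz i =>
  ⟨((le_dyadicFloor (dyadicGrid_antitone hkj (dyadicFloor_mem _ _))).2 (hy i).1).trans (hz i).1,
    (hz i).2.trans ((dyadicCeil_le (dyadicGrid_antitone hkj (dyadicCeil_mem _ _))).2 (hy i).2)⟩

lemma convex_closedCell (j : ℤ) (x : EuclideanSpace ℝ ι) : Convex ℝ (closedCell j x) := by
  have h : closedCell j x =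
      ⋂ i, EuclideanSpace.proj (𝕜 := ℝ) i ⁻¹' Icc (dyadicFloor j (x i)) (dyadicCeil j (x i)) := by
    ext; simp [closedCell]
  rw [h]
  exact convex_iInter fun i => (convex_Icc _ _).linear_preimage (EuclideanSpace.proj i).toLinearMap

lemma closedCell_subset_closedStar (j : ℤ) (x : EuclideanSpace ℝ ι) :
    closedCell j x ⊆ closedStar j x := fun y hy i => by
  have h := dyadicCeil_le_dyadicFloor_add j (x i)
  exact ⟨by linarith [(hy i).1], by linarith [(hy i).2]⟩

lemma closedStar_subset (hy : y ∈ closedCell j x) : closedStar j x ⊆ closedStar j y :=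
  fun p hp i => by
    have hlo := (le_dyadicFloor (dyadicFloor_mem j (x i))).2 (hy i).1
    have hhi := (dyadicCeil_le (dyadicCeil_mem j (x i))).2 (hy i).2
    exact ⟨by linarith [(hp i).1], by linarith [(hp i).2]⟩

lemma cellCenter_eq_of_mem_of_mem (hxy : x ∈ closedCell j y) (hyx : y ∈ closedCell j x) :
    cellCenter j x = cellCenter j y := by
  ext i
  have hfloor : dyadicFloor j (x i) = dyadicFloor j (y i) :=
    ((le_dyadicFloor (dyadicFloor_mem _ _)).2 (hyx i).1).antisymm
      ((le_dyadicFloor (dyadicFloor_mem _ _)).2 (hxy i).1)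
  have hceil : dyadicCeil j (x i) = dyadicCeil j (y i) :=
    ((dyadicCeil_le (dyadicCeil_mem _ _)).2 (hxy i).2).antisymm
      ((dyadicCeil_le (dyadicCeil_mem _ _)).2 (hyx i).2)
  rw [cellCenter_apply, cellCenter_apply, hfloor, hceil]

lemma cellCenter_mem_closedCell (j : ℤ) (x : EuclideanSpace ℝ ι) :
    cellCenter j x ∈ closedCell j x := fun i => by
  have h := (dyadicFloor_le j (x i)).trans (le_dyadicCeil j (x i))
  rw [cellCenter_apply]
  exact ⟨by linarith, by linarith⟩

lemma mem_closedCell_cellCenter (j : ℤ) (x : EuclideanSpace ℝ ι) :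
    x ∈ closedCell j (cellCenter j x) := fun i => by
  rw [cellCenter_apply, dyadicFloor_midpoint, dyadicCeil_midpoint]
  exact self_mem_closedCell j x i

lemma cellCenter_cellCenter (j : ℤ) (x : EuclideanSpace ℝ ι) :
    cellCenter j (cellCenter j x) = cellCenter j x :=
  cellCenter_eq_of_mem_of_mem (cellCenter_mem_closedCell j x) (mem_closedCell_cellCenter j x)

lemma eq_of_mem_closedCell (hi : x i ∈ dyadicGrid j) (hy : y ∈ closedCell j x) : y i = x i := by
  have h := hy i
  rw [dyadicFloor_of_mem hi, dyadicCeil_of_mem hi] at h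
  exact h.2.antisymm h.1

lemma dyadicFloor_of_cellCenter_eq (hd : cellCenter j d = d) (hi : d i ∉ dyadicGrid j) :
    dyadicFloor j (d i) = d i - 2 ^ j / 2 := by
  have hmid := cellCenter_apply j d i
  rw [hd] at hmid
  linarith [dyadicCeil_eq_add_of_notMem hi]

lemma dyadicCeil_of_cellCenter_eq (hd : cellCenter j d = d) (hi : d i ∉ dyadicGrid j) :
    dyadicCeil j (d i) = d i + 2 ^ j / 2 := by
  linarith [dyadicCeil_eq_add_of_notMem hi, dyadicFloor_of_cellCenter_eq hd hi]

lemma mem_closedCell_iff_of_cellCenter_eq (hd : cellCenter j d = d) :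
    x ∈ closedCell j d ↔ ∀ i, (d i ∈ dyadicGrid j → x i = d i) ∧ |x i - d i| ≤ 2 ^ j / 2 := by
  refine forall_congr' fun i => ?_
  by_cases hi : d i ∈ dyadicGrid j
  · rw [dyadicFloor_of_mem hi, dyadicCeil_of_mem hi, Icc_self, mem_singleton_iff]
    refine ⟨fun h => ⟨fun _ => h, ?_⟩, fun h => h.1 hi⟩
    rw [h, sub_self, abs_zero]
    positivity
  · rw [dyadicFloor_of_cellCenter_eq hd hi, dyadicCeil_of_cellCenter_eq hd hi, abs_sub_le_iff]
    constructor
    · exact fun h => ⟨fun hi' => absurd hi' hi, by linarith [h.2], by linarith [h.1]⟩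
    · exact fun h => ⟨by linarith [h.2.2], by linarith [h.2.1]⟩

lemma abs_sub_le_of_mem_closedCell (hd : cellCenter j d = d) (hx : x ∈ closedCell j d) (i : ι) :
    |x i - d i| ≤ 2 ^ j / 2 :=
  ((mem_closedCell_iff_of_cellCenter_eq hd).1 hx i).2

lemma notMem_dyadicGrid_of_abs_sub_eq (hx : x ∈ closedCell j d) (hi : |x i - d i| = 2 ^ j / 2) :
    d i ∉ dyadicGrid j := fun hmem => by
  rw [eq_of_mem_closedCell hmem hx, sub_self, abs_zero] at hi
  linarith [two_zpow_pos j]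

lemma mem_dyadicGrid_of_abs_sub_eq (hd : cellCenter j d = d) (hx : x ∈ closedCell j d)
    (hxi : |x i - d i| = 2 ^ j / 2) : x i ∈ dyadicGrid j := by
  have hi := notMem_dyadicGrid_of_abs_sub_eq hx hxi
  rcases (abs_eq (by positivity)).1 hxi with h | h
  · rw [sub_eq_iff_eq_add'.1 h, ← dyadicCeil_of_cellCenter_eq hd hi]
    exact dyadicCeil_mem _ _
  · rw [sub_eq_iff_eq_add'.1 h, ← sub_eq_add_neg, ← dyadicFloor_of_cellCenter_eq hd hi]
    exact dyadicFloor_mem _ _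

lemma mem_closedCell_of_abs_sub_ne (hd : cellCenter j d = d) (hx : x ∈ closedCell j d)
    (hne : ∀ i, |x i - d i| ≠ 2 ^ j / 2) : d ∈ closedCell j x := fun i => by
  by_cases hi : d i ∈ dyadicGrid j
  · rw [← eq_of_mem_closedCell hi hx]
    exact self_mem_closedCell j x i
  · have hlt := abs_sub_lt_iff.1 ((abs_sub_le_of_mem_closedCell hd hx i).lt_of_ne (hne i))
    have hfloor := dyadicFloor_of_cellCenter_eq hd hi
    have hmem := dyadicFloor_mem j (d i)
    rw [dyadicFloor_eq hmem (by linarith) (by linarith),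
      dyadicCeil_eq hmem (by linarith) (by linarith)]
    constructor <;> linarith [two_zpow_pos j]

end DyadicCells

section ConvexGeometry

lemma affineIndependent_of_erase {𝕜 V P : Type*} [DivisionRing 𝕜] [AddCommGroup V] [Module 𝕜 V]
    [AddTorsor V P] [DecidableEq P] {s : Finset P} {d : P} (hd : d ∈ s)
    (hs : AffineIndependent 𝕜 ((↑) : ↥(s.erase d) → P))
    (hspan : d ∉ affineSpan 𝕜 (s.erase d : Set P)) : AffineIndependent 𝕜 ((↑) : ↥s → P) := by
  let e : {c : ↥s // c ≠ ⟨d, hd⟩} ↪ ↥(s.erase d) :=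
    ⟨fun c => ⟨c, Finset.mem_erase.2 ⟨fun h => c.2 (Subtype.ext h), c.1.2⟩⟩,
      fun _ _ h => Subtype.ext (Subtype.ext (congrArg (fun a : ↥(s.erase d) => (a : P)) h))⟩
  refine AffineIndependent.affineIndependent_of_notMem_span (i := ⟨d, hd⟩)
    (hs.comp_embedding e) fun h => hspan (affineSpan_mono 𝕜 ?_ h)
  rintro _ ⟨c, hc, rfl⟩
  exact (e ⟨c, hc⟩).2

lemma exists_mem_convexHull_erase {V : Type*} [AddCommGroup V] [Module ℝ V] [DecidableEq V]
    {s : Finset V} {d x : V} (hd : d ∈ s) (hx : x ∈ convexHull ℝ (s : Set V)) (hxd : x ≠ d) :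
    ∃ y ∈ convexHull ℝ (s.erase d : Set V), ∃ ρ ∈ Ioc (0 : ℝ) 1, x - d = ρ • (y - d) := by
  rw [← Finset.insert_erase hd, Finset.coe_insert] at hx
  rcases (s.erase d).eq_empty_or_nonempty with hs | hs
  · simp [hs, hxd] at hx
  rw [convexHull_insert hs, mem_convexJoin] at hx
  obtain ⟨_, rfl, y, hy, hxy⟩ := hx
  rw [segment_eq_image'] at hxy
  obtain ⟨ρ, hρ, rfl⟩ := hxy
  refine ⟨y, hy, ρ, ⟨hρ.1.lt_of_ne ?_, hρ.2⟩, add_sub_cancel_left _ _⟩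
  rintro rfl
  simp at hxd

end ConvexGeometry

section Flags

variable {ι : Type*} {U : Set (EuclideanSpace ℝ ι)} {J : EuclideanSpace ℝ ι → ℤ}
  {s t : Finset (EuclideanSpace ℝ ι)} {c d x y : EuclideanSpace ℝ ι}

/-- `J x` is the scale of a decomposition of `U` into dyadic cells of variable size, the cell
through `x` being `closedCell (J x) x`. The scale does not increase on the closure of a cell, and
does not decrease when passing from `x` to a point whose cell of scale `J x` has `x` in its
closure; the latter says that neighbouring cells are not subdivided before `x` is. -/
structure IsScaleFunction (U : Set (EuclideanSpace ℝ ι)) (J : EuclideanSpace ℝ ι → ℤ) : Prop where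
  mem_and_le_of_mem : ∀ {x y}, x ∈ U → y ∈ closedCell (J x) x → y ∈ U ∧ J y ≤ J x
  mem_and_le_of_mem' : ∀ {x y}, x ∈ U → x ∈ closedCell (J x) y → y ∈ U ∧ J x ≤ J y

lemma IsScaleFunction.eq_of_mem_of_mem (hJ : IsScaleFunction U J) (hx : x ∈ U)
    (hyx : y ∈ closedCell (J x) x) (hxy : x ∈ closedCell (J x) y) : J y = J x :=
  (hJ.mem_and_le_of_mem hx hyx).2.antisymm (hJ.mem_and_le_of_mem' hx hxy).2

/-- `c` is the barycentre of a cell of the decomposition of `U` given by the scale `J`. -/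
structure IsCellVertex (U : Set (EuclideanSpace ℝ ι)) (J : EuclideanSpace ℝ ι → ℤ)
    (c : EuclideanSpace ℝ ι) : Prop where
  mem : c ∈ U
  cellCenter_eq : cellCenter (J c) c = c

/-- A finite set of barycentres of cells whose closures are nested: the vertex set of a simplex of
the barycentric subdivision. The empty flag is allowed. -/
structure IsFlag (U : Set (EuclideanSpace ℝ ι)) (J : EuclideanSpace ℝ ι → ℤ)
    (s : Finset (EuclideanSpace ℝ ι)) : Prop where
  isCellVertex : ∀ c ∈ s, IsCellVertex U J c
  isChain : IsChain (fun c d => c ∈ closedCell (J d) d) (s : Set (EuclideanSpace ℝ ι))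

/-- `d` is the barycentre of the largest cell of the flag `s`. -/
structure IsApex (J : EuclideanSpace ℝ ι → ℤ) (s : Finset (EuclideanSpace ℝ ι))
    (d : EuclideanSpace ℝ ι) : Prop where
  mem : d ∈ s
  subset : (s : Set (EuclideanSpace ℝ ι)) ⊆ closedCell (J d) d

lemma IsFlag.mono (ht : IsFlag U J t) (hst : s ⊆ t) : IsFlag U J s :=
  ⟨fun c hc => ht.isCellVertex c (hst hc), ht.isChain.mono hst⟩

lemma IsApex.convexHull_subset (hd : IsApex J s d) :
    convexHull ℝ (s : Set (EuclideanSpace ℝ ι)) ⊆ closedCell (J d) d :=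
  convexHull_min hd.subset (convex_closedCell _ _)

lemma IsFlag.exists_isApex (hJ : IsScaleFunction U J) (hs : IsFlag U J s) (hne : s.Nonempty) :
    ∃ d, IsApex J s d := by
  classical
  induction hne using Finset.Nonempty.cons_induction with
  | singleton d => exact ⟨d, Finset.mem_singleton_self d, by simp [self_mem_closedCell]⟩
  | cons c s hc _ ih =>
    rw [Finset.cons_eq_insert] at hs ⊢
    obtain ⟨d, hd⟩ := ih (hs.mono (Finset.subset_insert _ _))
    have hcd : c ≠ d := fun h => hc (h ▸ hd.mem)
    rcases hs.isChain (by simp) (by simp [hd.mem]) hcd with h | h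
    · refine ⟨d, Finset.mem_insert_of_mem hd.mem, ?_⟩
      rw [Finset.coe_insert]
      exact insert_subset h hd.subset
    · have hcU := (hs.isCellVertex c (Finset.mem_insert_self _ _)).mem
      refine ⟨c, Finset.mem_insert_self _ _, ?_⟩
      rw [Finset.coe_insert]
      exact insert_subset (self_mem_closedCell _ _)
        (hd.subset.trans (closedCell_subset (hJ.mem_and_le_of_mem hcU h).2 h))

lemma IsCellVertex.apply_mem_dyadicGrid (hc : IsCellVertex U J c) (i : ι) :
    c i ∈ dyadicGrid (J c - 1) := by
  rw [← hc.cellCenter_eq, cellCenter_apply, div_eq_inv_mul, ← zpow_neg_one, hc.cellCenter_eq,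
    sub_eq_neg_add]
  exact two_zpow_mul_mem_dyadicGrid (add_mem (dyadicFloor_mem _ _) (dyadicCeil_mem _ _)) (-1)

lemma IsCellVertex.exists_abs_sub_eq (hJ : IsScaleFunction U J) (hc : IsCellVertex U J c)
    (hd : IsCellVertex U J d) (hcd : c ∈ closedCell (J d) d) (hne : c ≠ d) :
    ∃ i, |c i - d i| = 2 ^ J d / 2 := by
  by_contra! h
  have hdc := mem_closedCell_of_abs_sub_ne hd.cellCenter_eq hcd h
  have hcenter := cellCenter_eq_of_mem_of_mem hcd hdc
  rw [← hJ.eq_of_mem_of_mem hd.mem hcd hdc, hc.cellCenter_eq,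
    hJ.eq_of_mem_of_mem hd.mem hcd hdc, hd.cellCenter_eq] at hcenter
  exact hne hcenter

/-- The second largest cell of the flag lies in a face of the largest one, hence so do all the
smaller ones. -/
lemma IsFlag.exists_eqOn_erase [DecidableEq (EuclideanSpace ℝ ι)] (hJ : IsScaleFunction U J)
    (hs : IsFlag U J s) (hd : IsApex J s d) (hne : (s.erase d).Nonempty) :
    ∃ i a, |a - d i| = 2 ^ J d / 2 ∧
      ∀ y ∈ convexHull ℝ (s.erase d : Set (EuclideanSpace ℝ ι)), y i = a := by
  have hs' := hs.mono (s.erase_subset d)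
  obtain ⟨e, he⟩ := hs'.exists_isApex hJ hne
  have hed : e ∈ closedCell (J d) d := hd.subset (Finset.mem_of_mem_erase he.mem)
  have hdv := hs.isCellVertex d hd.mem
  obtain ⟨i, hi⟩ := (hs'.isCellVertex e he.mem).exists_abs_sub_eq hJ hdv hed
    (Finset.ne_of_mem_erase he.mem)
  have hgrid : e i ∈ dyadicGrid (J e) :=
    dyadicGrid_antitone (hJ.mem_and_le_of_mem hdv.mem hed).2
      (mem_dyadicGrid_of_abs_sub_eq hdv.cellCenter_eq hed hi)
  exact ⟨i, e i, hi, fun y hy => eq_of_mem_closedCell hgrid (he.convexHull_subset hy)⟩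

lemma IsFlag.affineIndependent (hJ : IsScaleFunction U J) (hs : IsFlag U J s) :
    AffineIndependent ℝ ((↑) : s → EuclideanSpace ℝ ι) := by
  classical
  induction s using Finset.strongInduction with
  | H s ih =>
  rcases s.eq_empty_or_nonempty with rfl | hne
  · exact affineIndependent_of_subsingleton ℝ _
  obtain ⟨d, hd⟩ := hs.exists_isApex hJ hne
  refine affineIndependent_of_erase hd.mem
    (ih _ (Finset.erase_ssubset hd.mem) (hs.mono (s.erase_subset d))) fun hmem => ?_
  have hne' : (s.erase d).Nonempty :=
    Finset.coe_nonempty.1 ((affineSpan_nonempty ℝ).1 ⟨d, hmem⟩)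
  obtain ⟨i, a, ha, hi⟩ := hs.exists_eqOn_erase hJ hd hne'
  let coord : EuclideanSpace ℝ ι →ᵃ[ℝ] ℝ :=
    (EuclideanSpace.proj (𝕜 := ℝ) i).toLinearMap.toAffineMap
  have hcoord : EqOn coord (AffineMap.const ℝ _ a)
      (affineSpan ℝ (s.erase d : Set (EuclideanSpace ℝ ι)) : Set (EuclideanSpace ℝ ι)) :=
    AffineMap.eqOn_affineSpan fun c hc => hi c (subset_convexHull ℝ _ hc)
  have hdi : d i = a := hcoord hmem
  rw [hdi, sub_self, abs_zero] at ha
  linarith [two_zpow_pos (J d)]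

lemma IsFlag.eq_cellCenter [DecidableEq (EuclideanSpace ℝ ι)] (hJ : IsScaleFunction U J)
    (hs : IsFlag U J s) (hd : IsApex J s d)
    (hx : x ∈ convexHull ℝ (s : Set (EuclideanSpace ℝ ι)))
    (hx' : x ∉ convexHull ℝ (s.erase d : Set (EuclideanSpace ℝ ι))) : cellCenter (J x) x = d := by
  have hdv := hs.isCellVertex d hd.mem
  have hxd := hd.convexHull_subset hx
  have hdx : d ∈ closedCell (J d) x := by
    by_contra h
    have hne : x ≠ d := fun hxd => h (hxd ▸ self_mem_closedCell _ _)
    obtain ⟨y, hy, ρ, hρ, hxy⟩ := exists_mem_convexHull_erase hd.mem hx hne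
    refine h (mem_closedCell_of_abs_sub_ne hdv.cellCenter_eq hxd fun i hi => hx' ?_)
    have hyd := abs_sub_le_of_mem_closedCell hdv.cellCenter_eq
      (hd.convexHull_subset (convexHull_mono (s.erase_subset d) hy)) i
    have hxyi : x i - d i = ρ * (y i - d i) := congrArg (fun v => v.ofLp i) hxy
    rw [hxyi, abs_mul, abs_of_pos hρ.1] at hi
    have hρ1 : ρ = 1 := hρ.2.antisymm (by nlinarith [two_zpow_pos (J d), hρ.1])
    rw [hρ1, one_smul, sub_left_inj] at hxy
    exact hxy ▸ hy
  rw [hJ.eq_of_mem_of_mem hdv.mem hxd hdx, cellCenter_eq_of_mem_of_mem hxd hdx, hdv.cellCenter_eq]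

end Flags

section DyadicComplex

variable {ι : Type*} {U : Set (EuclideanSpace ℝ ι)} {J : EuclideanSpace ℝ ι → ℤ}
  {s t : Finset (EuclideanSpace ℝ ι)} {d x : EuclideanSpace ℝ ι} {j : ℤ}

lemma pi_norm_sub_eq [Fintype ι] (hd : cellCenter j d = d) (hx : x ∈ closedCell j d) {i : ι}
    (hi : |x i - d i| = 2 ^ j / 2) : ‖(x - d).ofLp‖ = 2 ^ j / 2 := by
  refine le_antisymm ((pi_norm_le_iff_of_nonneg (by positivity)).2 fun i => ?_) ?_
  · exact abs_sub_le_of_mem_closedCell hd hx i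
  · exact hi.symm.le.trans (norm_le_pi_norm (x - d).ofLp i)

/-- A simplex is a cone over its face opposite to the apex; the point of that face on the ray from
the apex through `x` is at sup-distance `2 ^ J d / 2` from the apex, hence depends on `x` only. -/
lemma IsFlag.exists_cone_coordinates [Fintype ι] [DecidableEq (EuclideanSpace ℝ ι)]
    (hJ : IsScaleFunction U J) (hs : IsFlag U J s) (hd : IsApex J s d)
    (hx : x ∈ convexHull ℝ (s : Set (EuclideanSpace ℝ ι))) (hxd : x ≠ d) :
    ∃ ρ : ℝ, ρ ∈ Ioc 0 1 ∧ ‖(x - d).ofLp‖ = ρ * (2 ^ J d / 2) ∧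
      ∃ y ∈ convexHull ℝ (s.erase d : Set (EuclideanSpace ℝ ι)), x - d = ρ • (y - d) := by
  obtain ⟨y, hy, ρ, hρ, hxy⟩ := exists_mem_convexHull_erase hd.mem hx hxd
  obtain ⟨i, a, ha, hi⟩ := hs.exists_eqOn_erase hJ hd
    (Finset.coe_nonempty.1 (convexHull_nonempty_iff.1 ⟨y, hy⟩))
  refine ⟨ρ, hρ, ?_, y, hy, hxy⟩
  have hyd := hd.convexHull_subset (convexHull_mono (s.erase_subset d) hy)
  rw [hxy, WithLp.ofLp_smul, norm_smul, Real.norm_of_nonneg hρ.1.le,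
    pi_norm_sub_eq (hs.isCellVertex d hd.mem).cellCenter_eq hyd (hi y hy ▸ ha)]

lemma IsFlag.convexHull_inter_subset [Finite ι] (hJ : IsScaleFunction U J) (hs : IsFlag U J s)
    (ht : IsFlag U J t) :
    convexHull ℝ (s : Set (EuclideanSpace ℝ ι)) ∩ convexHull ℝ (t : Set (EuclideanSpace ℝ ι)) ⊆
      convexHull ℝ ((s : Set (EuclideanSpace ℝ ι)) ∩ t) := by
  classical
  cases nonempty_fintype ι
  induction hn : s.card + t.card using Nat.strong_induction_on generalizing s t with
  | _ n ih =>
  subst hn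
  rintro x ⟨hxs, hxt⟩
  have nonempty_of_mem {r : Finset (EuclideanSpace ℝ ι)} (h : x ∈ convexHull ℝ (r : Set _)) :
      r.Nonempty := Finset.coe_nonempty.1 (convexHull_nonempty_iff.1 ⟨x, h⟩)
  obtain ⟨d, hd⟩ := hs.exists_isApex hJ (nonempty_of_mem hxs)
  obtain ⟨e, he⟩ := ht.exists_isApex hJ (nonempty_of_mem hxt)
  have hsd := Finset.card_erase_lt_of_mem hd.mem
  have hte := Finset.card_erase_lt_of_mem he.mem
  by_cases hxs' : x ∈ convexHull ℝ (s.erase d : Set (EuclideanSpace ℝ ι))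
  · exact convexHull_mono (inter_subset_inter_left _ (s.erase_subset d))
      (ih _ (by omega) (hs.mono (s.erase_subset d)) ht rfl ⟨hxs', hxt⟩)
  by_cases hxt' : x ∈ convexHull ℝ (t.erase e : Set (EuclideanSpace ℝ ι))
  · exact convexHull_mono (inter_subset_inter_right _ (t.erase_subset e))
      (ih _ (by omega) hs (ht.mono (t.erase_subset e)) rfl ⟨hxs, hxt'⟩)
  obtain rfl : d = e :=
    (hs.eq_cellCenter hJ hd hxs hxs').symm.trans (ht.eq_cellCenter hJ he hxt hxt')
  have hdst := subset_convexHull ℝ _ (mem_inter hd.mem he.mem)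
  rcases eq_or_ne x d with rfl | hxd
  · exact hdst
  obtain ⟨ρ, hρ, hρn, y, hy, hxy⟩ := hs.exists_cone_coordinates hJ hd hxs hxd
  obtain ⟨σ, -, hσn, z, hz, hxz⟩ := ht.exists_cone_coordinates hJ he hxt hxd
  obtain rfl : ρ = σ := mul_right_cancel₀ (by positivity) (hρn.symm.trans hσn)
  obtain rfl : y = z := sub_left_injective (smul_right_injective _ hρ.1.ne' (hxy.symm.trans hxz))
  have hyst := convexHull_mono (inter_subset_inter (s.erase_subset d) (t.erase_subset d))
    (ih _ (by omega) (hs.mono (s.erase_subset d)) (ht.mono (t.erase_subset d)) rfl ⟨hy, hz⟩)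
  rw [eq_add_of_sub_eq' hxy]
  exact (convex_convexHull ℝ _).add_smul_sub_mem hdst hyst ⟨hρ.1.le, hρ.2⟩

/-- The barycentric subdivision of the dyadic decomposition of `U` given by the scale `J`. -/
def dyadicComplex [Finite ι] (hJ : IsScaleFunction U J) :
    Geometry.SimplicialComplex ℝ (EuclideanSpace ℝ ι) :=
  .ofErase {s | IsFlag U J s} (fun _ hs => hs.affineIndependent hJ) (fun _ _ hst ht => ht.mono hst)
    fun _ hs _ ht => hs.convexHull_inter_subset hJ ht

lemma mem_faces_dyadicComplex [Finite ι] {hJ : IsScaleFunction U J} :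
    s ∈ (dyadicComplex hJ).faces ↔ IsFlag U J s ∧ s.Nonempty := by
  rw [Finset.nonempty_iff_ne_empty]; rfl

end DyadicComplex

section Covering

variable {ι : Type*} {U : Set (EuclideanSpace ℝ ι)} {J : EuclideanSpace ℝ ι → ℤ}
  {s : Finset (EuclideanSpace ℝ ι)} {d e v x y z : EuclideanSpace ℝ ι} {j : ℤ}

lemma exists_add_smul_mem_closedCell [Finite ι] (hd : cellCenter j d = d) (hv : v ≠ 0)
    (hvd : ∀ i, d i ∈ dyadicGrid j → v i = 0) :
    ∃ r : ℝ, 0 < r ∧ d + r • v ∈ closedCell j d ∧ ∃ i, |(d + r • v) i - d i| = 2 ^ j / 2 := by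
  have : Nonempty ι := not_isEmpty_iff.1 fun _ => hv (Subsingleton.elim _ _)
  obtain ⟨i, hi⟩ := Finite.exists_max fun l => |v l|
  have hvi : 0 < |v i| := by
    obtain ⟨l, hl⟩ : ∃ l, v l ≠ 0 := by
      by_contra! h
      exact hv (PiLp.ext h)
    exact (abs_pos.2 hl).trans_le (hi l)
  have hr : 0 < 2 ^ j / 2 / |v i| := by positivity
  have hcoord (l : ι) : |(d + (2 ^ j / 2 / |v i|) • v) l - d l| = 2 ^ j / 2 / |v i| * |v l| := by
    rw [PiLp.add_apply, PiLp.smul_apply, smul_eq_mul, add_sub_cancel_left, abs_mul, abs_of_pos hr]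
  refine ⟨2 ^ j / 2 / |v i|, hr,
    (mem_closedCell_iff_of_cellCenter_eq hd).2 fun l => ⟨fun hl => by simp [hvd l hl], ?_⟩, i, ?_⟩
  · rw [hcoord, div_mul_eq_mul_div, div_le_iff₀ hvi]
    exact mul_le_mul_of_nonneg_left (hi l) (by positivity)
  · rw [hcoord, div_mul_cancel₀ _ hvi.ne']

variable [Fintype ι]

open scoped Classical in
/-- The coordinate directions spanned by `closedCell j x`; their number is its dimension. -/
def freeCoords (j : ℤ) (x : EuclideanSpace ℝ ι) : Finset ι := {i | x i ∉ dyadicGrid j}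

lemma mem_freeCoords {i : ι} : i ∈ freeCoords j x ↔ x i ∉ dyadicGrid j := by simp [freeCoords]

lemma freeCoords_cellCenter (j : ℤ) (x : EuclideanSpace ℝ ι) :
    freeCoords j (cellCenter j x) = freeCoords j x := by
  ext i
  rw [mem_freeCoords, mem_freeCoords, cellCenter_apply, midpoint_mem_dyadicGrid_iff]

/-- Radial projection from the barycentre of a cell onto its relative boundary. -/
lemma exists_abs_sub_eq_and_mem_segment (hd : cellCenter j d = d) (hne : (freeCoords j d).Nonempty)
    (hx : x ∈ closedCell j d) :
    ∃ y ∈ closedCell j d, (∃ i, |y i - d i| = 2 ^ j / 2) ∧ x ∈ segment ℝ d y := by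
  classical
  rcases eq_or_ne x d with rfl | hxd
  · obtain ⟨l, hl⟩ := hne
    obtain ⟨r, -, hmem, hi⟩ := exists_add_smul_mem_closedCell (v := EuclideanSpace.single l 1) hd
      (by simp) fun i hi => by
        have hil : i ≠ l := fun h => mem_freeCoords.1 hl (h ▸ hi)
        simp [hil]
    exact ⟨_, hmem, hi, left_mem_segment ℝ _ _⟩
  · have hvd (i : ι) (hi : d i ∈ dyadicGrid j) : (x - d) i = 0 :=
      sub_eq_zero.2 (eq_of_mem_closedCell hi hx)
    obtain ⟨r, hr, hmem, i, hi⟩ := exists_add_smul_mem_closedCell hd (sub_ne_zero.2 hxd) hvd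
    refine ⟨_, hmem, ⟨i, hi⟩, ?_⟩
    have hxi := abs_sub_le_of_mem_closedCell hd hx i
    have hcoord : |(d + r • (x - d)) i - d i| = r * |x i - d i| := by simp [abs_mul, abs_of_pos hr]
    have hr1 : 1 ≤ r := by
      by_contra! h
      nlinarith [two_zpow_pos j, abs_nonneg (x i - d i)]
    rw [segment_eq_image']
    refine ⟨r⁻¹, ⟨by positivity, inv_le_one_of_one_le₀ hr1⟩, ?_⟩
    simp [smul_smul, hr.ne']

lemma IsScaleFunction.exists_isCellVertex (hJ : IsScaleFunction U J) (hy : y ∈ U)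
    (hyz : y ∈ closedCell (J y) z) :
    ∃ e, IsCellVertex U J e ∧ J y ≤ J e ∧ J e = J z ∧ e ∈ closedCell (J z) z ∧
      y ∈ closedCell (J e) e ∧ freeCoords (J e) e = freeCoords (J e) z := by
  obtain ⟨hz, hyz'⟩ := hJ.mem_and_le_of_mem' hy hyz
  have hez := cellCenter_mem_closedCell (J z) z
  have hze := mem_closedCell_cellCenter (J z) z
  have hJe := hJ.eq_of_mem_of_mem hz hez hze
  refine ⟨cellCenter (J z) z, ⟨(hJ.mem_and_le_of_mem hz hez).1, ?_⟩, hyz'.trans_eq hJe.symm, hJe,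
    hez, ?_, ?_⟩
  · rw [hJe, cellCenter_cellCenter]
  · rw [hJe]
    exact closedCell_subset le_rfl hze (closedCell_subset hyz' (self_mem_closedCell _ _) hyz)
  · rw [hJe, freeCoords_cellCenter]

open scoped Classical in
/-- A point `y` of the relative boundary of a cell lies in a cell of codimension one in it: move
the free coordinates of `y` off the grid, except for one in which `y` is extremal. -/
lemma IsCellVertex.exists_facet (hJ : IsScaleFunction U J) (hd : IsCellVertex U J d)
    (hy : y ∈ closedCell (J d) d) {i : ι} (hi : |y i - d i| = 2 ^ J d / 2) :
    ∃ e, IsCellVertex U J e ∧ e ∈ closedCell (J d) d ∧ y ∈ closedCell (J e) e ∧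
      freeCoords (J e) e = (freeCoords (J d) d).erase i := by
  obtain ⟨hyU, hyd⟩ := hJ.mem_and_le_of_mem hd.mem hy
  have hchoose (l : ι) : ∃ a ∈ Icc (dyadicFloor (J d) (d l)) (dyadicCeil (J d) (d l)),
      (l = i ∨ d l ∈ dyadicGrid (J d) → a = y l) ∧
      (¬(l = i ∨ d l ∈ dyadicGrid (J d)) → a ∉ dyadicGrid (J y)) ∧
      y l ∈ Icc (dyadicFloor (J y) a) (dyadicCeil (J y) a) := by
    by_cases hl : l = i ∨ d l ∈ dyadicGrid (J d)
    · exact ⟨y l, hy l, fun _ => rfl, fun h => absurd hl h, self_mem_closedCell (J y) y l⟩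
    · have hlt : dyadicFloor (J d) (d l) < dyadicCeil (J d) (d l) := by
        rw [dyadicCeil_eq_add_of_notMem fun h => hl (.inr h)]
        exact lt_add_of_pos_right _ (two_zpow_pos _)
      obtain ⟨a, ha, hagrid, hya⟩ := exists_notMem_dyadicGrid_mem_Icc
        (dyadicGrid_antitone hyd (dyadicFloor_mem _ _))
        (dyadicGrid_antitone hyd (dyadicCeil_mem _ _)) hlt (hy l)
      exact ⟨a, ha, fun h => absurd h hl, fun _ => hagrid, hya⟩
  choose a had hay hagrid hya using hchoose
  let z : EuclideanSpace ℝ ι := WithLp.toLp 2 a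
  obtain ⟨e, he, hye, hez, hezmem, hyemem, hfree⟩ := hJ.exists_isCellVertex (z := z) hyU hya
  have hzd := (hJ.mem_and_le_of_mem hd.mem (y := z) had).2
  refine ⟨e, he, closedCell_subset hzd had hezmem, hyemem, hfree.trans ?_⟩
  have hgrid : dyadicGrid (J d) ≤ dyadicGrid (J e) := dyadicGrid_antitone (hez ▸ hzd)
  ext l
  rw [Finset.mem_erase, mem_freeCoords, mem_freeCoords, ← not_or, not_iff_not]
  refine ⟨fun h => by_contra fun hl => hagrid l hl (dyadicGrid_antitone hye h), fun h => ?_⟩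
  have hzl : z l = y l := hay l h
  rw [hzl]
  rcases h with rfl | h
  · exact hgrid (mem_dyadicGrid_of_abs_sub_eq hd.cellCenter_eq hy hi)
  · rw [eq_of_mem_closedCell h hy]
    exact hgrid h

open scoped Classical in
lemma IsFlag.insert (hJ : IsScaleFunction U J) (hs : IsFlag U J s) (he : IsApex J s e)
    (hd : IsCellVertex U J d) (hed : e ∈ closedCell (J d) d) :
    IsFlag U J (insert d s) ∧ IsApex J (insert d s) d := by
  have hsub : (s : Set (EuclideanSpace ℝ ι)) ⊆ closedCell (J d) d :=
    he.subset.trans (closedCell_subset (hJ.mem_and_le_of_mem hd.mem hed).2 hed)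
  refine ⟨⟨by simpa [hd] using hs.isCellVertex, ?_⟩, Finset.mem_insert_self _ _, ?_⟩
  · rw [Finset.coe_insert]
    exact hs.isChain.insert fun c hc _ => .inr (hsub hc)
  · rw [Finset.coe_insert]
    exact insert_subset (self_mem_closedCell _ _) hsub

theorem IsCellVertex.exists_isFlag (hJ : IsScaleFunction U J) (hd : IsCellVertex U J d)
    (hx : x ∈ closedCell (J d) d) :
    ∃ s, IsFlag U J s ∧ IsApex J s d ∧ s.card = (freeCoords (J d) d).card + 1 ∧
      x ∈ convexHull ℝ (s : Set (EuclideanSpace ℝ ι)) := by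
  classical
  induction hn : (freeCoords (J d) d).card generalizing d x with
  | zero =>
    have hfree := Finset.card_eq_zero.1 hn
    have hxd : x = d := by
      ext i
      refine eq_of_mem_closedCell (by_contra fun hi => ?_) hx
      simpa [hfree] using mem_freeCoords.2 hi
    exact ⟨{d}, ⟨by simpa using hd, by simp⟩, ⟨by simp, by simp [self_mem_closedCell]⟩,
      by simp, by simp [hxd]⟩
  | succ n ih =>
    obtain ⟨y, hy, ⟨i, hi⟩, hxy⟩ := exists_abs_sub_eq_and_mem_segment hd.cellCenter_eq
      (Finset.card_pos.1 (hn ▸ n.succ_pos)) hx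
    have hdi := notMem_dyadicGrid_of_abs_sub_eq hy hi
    obtain ⟨e, he, hed, hye, hfree⟩ := hd.exists_facet hJ hy hi
    obtain ⟨s, hs, hse, hcard, hys⟩ := ih he hye (by
      rw [hfree, Finset.card_erase_of_mem (mem_freeCoords.2 hdi), hn, Nat.add_sub_cancel])
    have hei : e i ∈ dyadicGrid (J e) := by
      by_contra h
      simpa [hfree] using mem_freeCoords.2 h
    have hds : d ∉ s := fun hds => by
      rw [eq_of_mem_closedCell hei hye, eq_of_mem_closedCell hei (hse.subset hds), sub_self,
        abs_zero] at hi
      linarith [two_zpow_pos (J d)]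
    obtain ⟨hflag, hapex⟩ := hs.insert hJ hse hd hed
    refine ⟨insert d s, hflag, hapex, by rw [Finset.card_insert_of_notMem hds, hcard], ?_⟩
    exact (convex_convexHull ℝ _).segment_subset (subset_convexHull ℝ _ hapex.mem)
      (convexHull_mono (Finset.subset_insert d s) hys) hxy

theorem iUnion_convexHull_isFlag (hJ : IsScaleFunction U J) :
    ⋃ s ∈ {s | IsFlag U J s ∧ s.card = Fintype.card ι + 1},
      convexHull ℝ (s : Set (EuclideanSpace ℝ ι)) = U := by
  refine Subset.antisymm (iUnion₂_subset fun s ⟨hs, hcard⟩ x hx => ?_) fun x hx => ?_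
  · obtain ⟨d, hd⟩ := hs.exists_isApex hJ (Finset.card_pos.1 (hcard ▸ Nat.succ_pos _))
    exact (hJ.mem_and_le_of_mem (hs.isCellVertex d hd.mem).mem (hd.convexHull_subset hx)).1
  · have hchoose (l : ι) : ∃ a, a ∉ dyadicGrid (J x) ∧
        x l ∈ Icc (dyadicFloor (J x) a) (dyadicCeil (J x) a) := by
      obtain ⟨a, -, ha⟩ := exists_notMem_dyadicGrid_mem_Icc (dyadicFloor_mem (J x) (x l))
        (add_mem (dyadicFloor_mem (J x) (x l)) (two_zpow_mem_dyadicGrid _))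
        (lt_add_of_pos_right _ (two_zpow_pos _))
        ⟨dyadicFloor_le _ _, (lt_dyadicFloor_add _ _).le⟩
      exact ⟨a, ha⟩
    choose a hagrid hxa using hchoose
    obtain ⟨d, hd, hxd, -, -, hxmem, hfree⟩ :=
      hJ.exists_isCellVertex (z := WithLp.toLp 2 a) hx hxa
    have huniv : freeCoords (J d) d = Finset.univ := by
      rw [hfree, Finset.eq_univ_iff_forall]
      exact fun l => mem_freeCoords.2 fun h => hagrid l (dyadicGrid_antitone hxd h)
    obtain ⟨s, hs, -, hcard, hxs⟩ := hd.exists_isFlag hJ hxmem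
    exact mem_biUnion (x := s) ⟨hs, by rw [hcard, huniv, Finset.card_univ]⟩ hxs

end Covering

section WhitneyScale

variable {ι : Type*} [Fintype ι] {Z : Set (EuclideanSpace ℝ ι)} {J : EuclideanSpace ℝ ι → ℤ}
  {s : Finset (EuclideanSpace ℝ ι)} {c d p x y : EuclideanSpace ℝ ι} {j : ℤ}

lemma dist_le_sqrt_card_mul {r : ℝ} (hr : 0 ≤ r) (h : ∀ i, |x i - y i| ≤ r) :
    dist x y ≤ √(Fintype.card ι) * r := by
  rw [EuclideanSpace.dist_eq]
  calc √(∑ i, dist (x i) (y i) ^ 2) ≤ √(∑ _i : ι, r ^ 2) := by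
        gcongr with i
        exact h i
    _ = √(Fintype.card ι) * r := by
        simp [Real.sqrt_mul, Real.sqrt_sq hr]

lemma dist_le_of_mem_closedStar (hp : p ∈ closedStar j x) :
    dist p x ≤ √(Fintype.card ι) * 2 ^ j :=
  dist_le_sqrt_card_mul (two_zpow_pos j).le fun i => abs_sub_le_iff.2
    ⟨by linarith [(hp i).2, dyadicFloor_le j (x i)], by linarith [(hp i).1, le_dyadicCeil j (x i)]⟩

lemma dist_le_of_mem_closedCell (hc : c ∈ closedCell j x) (hd : d ∈ closedCell j x) :
    dist c d ≤ √(Fintype.card ι) * 2 ^ j := by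
  refine dist_le_sqrt_card_mul (two_zpow_pos j).le fun i => ?_
  have h := dyadicCeil_le_dyadicFloor_add j (x i)
  exact abs_sub_le_iff.2 ⟨by linarith [(hc i).2, (hd i).1], by linarith [(hc i).1, (hd i).2]⟩

/-- The cubes of scale `j` around `x` are far from `Z` compared with their diameter
`√(card ι) * 2 ^ j`. -/
def IsAdmissible (Z : Set (EuclideanSpace ℝ ι)) (j : ℤ) (x : EuclideanSpace ℝ ι) : Prop :=
  ∀ p ∈ closedStar j x, √(Fintype.card ι) * 2 ^ j ≤ infDist p Z

/-- The largest scale of an admissible cell through `x`, with junk value for `x ∈ Z`. -/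
def whitneyScale (Z : Set (EuclideanSpace ℝ ι)) (x : EuclideanSpace ℝ ι) : ℤ :=
  sSup {j | IsAdmissible Z j x}

lemma IsAdmissible.of_mem_closedCell (h : IsAdmissible Z j x) (hxy : x ∈ closedCell j y) :
    IsAdmissible Z j y := fun p hp => h p (closedStar_subset hxy hp)

lemma IsAdmissible.notMem [Nonempty ι] (h : IsAdmissible Z j x) (hp : p ∈ closedStar j x) :
    p ∉ Z := fun hpZ => by
  have hpos : 0 < √(Fintype.card ι) * (2 : ℝ) ^ j := by positivity
  exact (hpos.trans_le (h p hp)).ne' (infDist_zero_of_mem hpZ)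

lemma isGreatest_whitneyScale [Nonempty ι] (hZ : IsClosed Z) (hne : Z.Nonempty) (hx : x ∉ Z) :
    IsGreatest {j | IsAdmissible Z j x} (whitneyScale Z x) := by
  have hdist : 0 < infDist x Z := (hZ.notMem_iff_infDist_pos hne).1 hx
  have hcard : 0 < 2 * √(Fintype.card ι) := by positivity
  obtain ⟨n, hlow, hhigh⟩ := exists_mem_Ico_zpow (div_pos hdist hcard) one_lt_two
  rw [le_div_iff₀' hcard] at hlow
  rw [div_lt_iff₀' hcard] at hhigh
  have hadm : IsAdmissible Z n x := fun p hp => by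
    have hxp := dist_le_of_mem_closedStar hp
    rw [dist_comm] at hxp
    linarith [infDist_le_infDist_add_dist (s := Z) (x := x) (y := p)]
  have hbdd : BddAbove {j | IsAdmissible Z j x} := by
    refine ⟨n + 1 + 1, fun j hj => ?_⟩
    have hj := hj x (closedCell_subset_closedStar j x (self_mem_closedCell j x))
    refine ((zpow_lt_zpow_iff_right₀ (one_lt_two (α := ℝ))).1 ?_).le
    rw [zpow_add_one₀ two_ne_zero (n + 1)]
    exact lt_of_mul_lt_mul_left (by linarith) (Real.sqrt_nonneg (Fintype.card ι))
  exact ⟨Int.csSup_mem ⟨n, hadm⟩ hbdd, fun j hj => le_csSup hbdd hj⟩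

lemma isScaleFunction_whitneyScale [Nonempty ι] (hZ : IsClosed Z) (hne : Z.Nonempty) :
    IsScaleFunction Zᶜ (whitneyScale Z) where
  mem_and_le_of_mem {x y} hx hyx := by
    have hxmax := isGreatest_whitneyScale hZ hne hx
    have hy : y ∉ Z := hxmax.1.notMem (closedCell_subset_closedStar _ _ hyx)
    have hymax := isGreatest_whitneyScale hZ hne hy
    refine ⟨hy, not_lt.1 fun hlt => hlt.not_ge (hxmax.2 ?_)⟩
    exact hymax.1.of_mem_closedCell (closedCell_subset hlt.le (self_mem_closedCell _ x) hyx)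
  mem_and_le_of_mem' {x y} hx hxy := by
    have hadm := (isGreatest_whitneyScale hZ hne hx).1.of_mem_closedCell hxy
    have hy : y ∉ Z := hadm.notMem (closedCell_subset_closedStar _ _ (self_mem_closedCell _ y))
    exact ⟨hy, (isGreatest_whitneyScale hZ hne hy).2 hadm⟩

lemma whitneyScale_sub_one_le [Nonempty ι] (hZ : IsClosed Z) (hne : Z.Nonempty) (hx : x ∉ Z)
    (hyx : y ∈ closedCell (whitneyScale Z x) x) : whitneyScale Z x - 1 ≤ whitneyScale Z y := by
  have hadm := (isGreatest_whitneyScale hZ hne hx).1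
  have hyx := closedCell_subset_closedStar _ _ hyx
  refine (isGreatest_whitneyScale hZ hne (hadm.notMem hyx)).2 fun p hp => ?_
  have hyp := dist_le_of_mem_closedStar hp
  have hyZ := hadm y hyx
  rw [← sub_add_cancel (whitneyScale Z x) 1, zpow_add_one₀ two_ne_zero] at hyZ
  rw [dist_comm] at hyp
  linarith [infDist_le_infDist_add_dist (s := Z) (x := y) (y := p)]

lemma infDist_le_mul_two_zpow_whitneyScale [Nonempty ι] (hZ : IsClosed Z) (hne : Z.Nonempty)
    (hx : x ∉ Z) : infDist x Z ≤ 4 * √(Fintype.card ι) * 2 ^ whitneyScale Z x := by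
  have hadm : ¬ IsAdmissible Z (whitneyScale Z x + 1) x := fun h =>
    (lt_add_one _).not_ge ((isGreatest_whitneyScale hZ hne hx).2 h)
  simp only [IsAdmissible, not_forall, not_le] at hadm
  obtain ⟨p, hp, hpZ⟩ := hadm
  have hxp := dist_le_of_mem_closedStar hp
  rw [zpow_add_one₀ two_ne_zero] at hpZ hxp
  rw [dist_comm] at hxp
  linarith [infDist_le_infDist_add_dist (s := Z) (x := x) (y := p)]

lemma IsApex.diam_convexHull_le (hd : IsApex J s d) :
    diam (convexHull ℝ (s : Set (EuclideanSpace ℝ ι))) ≤ √(Fintype.card ι) * 2 ^ J d :=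
  diam_le_of_forall_dist_le (by positivity) fun _ hx _ hy =>
    dist_le_of_mem_closedCell (hd.convexHull_subset hx) (hd.convexHull_subset hy)

lemma IsFlag.two_zpow_le_two_mul_diam {U : Set (EuclideanSpace ℝ ι)} (hJ : IsScaleFunction U J)
    (hs : IsFlag U J s) (hd : IsApex J s d) (hcard : 2 ≤ s.card) :
    2 ^ J d ≤ 2 * diam (convexHull ℝ (s : Set (EuclideanSpace ℝ ι))) := by
  obtain ⟨c, hc, hcd⟩ := Finset.exists_mem_ne hcard d
  obtain ⟨i, hi⟩ :=
    (hs.isCellVertex c hc).exists_abs_sub_eq hJ (hs.isCellVertex d hd.mem) (hd.subset hc) hcd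
  have hcoord : |c i - d i| ≤ dist c d := by
    simpa [dist_eq_norm] using PiLp.norm_apply_le (c - d) i
  have hdiam := dist_le_diam_of_mem (isBounded_convexHull.2 s.finite_toSet.isBounded)
    (subset_convexHull ℝ (s : Set (EuclideanSpace ℝ ι)) hc) (subset_convexHull ℝ _ hd.mem)
  linarith

lemma IsFlag.diam_le_infDist [Nonempty ι] (hZ : IsClosed Z) (hne : Z.Nonempty)
    (hs : IsFlag Zᶜ (whitneyScale Z) s) (hx : x ∈ convexHull ℝ (s : Set (EuclideanSpace ℝ ι))) :
    diam (convexHull ℝ (s : Set (EuclideanSpace ℝ ι))) ≤ infDist x Z := by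
  obtain ⟨d, hd⟩ := hs.exists_isApex (isScaleFunction_whitneyScale hZ hne)
    (convexHull_nonempty_iff.1 ⟨x, hx⟩)
  have hadm := (isGreatest_whitneyScale hZ hne (hs.isCellVertex d hd.mem).mem).1
  exact hd.diam_convexHull_le.trans
    (hadm x (closedCell_subset_closedStar _ _ (hd.convexHull_subset hx)))

lemma IsFlag.exists_infDist_le_diam [Nonempty ι] (hZ : IsClosed Z) (hne : Z.Nonempty)
    (hs : IsFlag Zᶜ (whitneyScale Z) s) (hcard : 2 ≤ s.card) :
    ∃ x ∈ convexHull ℝ (s : Set (EuclideanSpace ℝ ι)), infDist x Z ≤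
      8 * √(Fintype.card ι) * diam (convexHull ℝ (s : Set (EuclideanSpace ℝ ι))) := by
  have hJ := isScaleFunction_whitneyScale hZ hne
  obtain ⟨d, hd⟩ := hs.exists_isApex hJ (Finset.card_pos.1 (by lia))
  refine ⟨d, subset_convexHull ℝ _ hd.mem, ?_⟩
  calc infDist d Z ≤ 4 * √(Fintype.card ι) * 2 ^ whitneyScale Z d :=
        infDist_le_mul_two_zpow_whitneyScale hZ hne (hs.isCellVertex d hd.mem).mem
    _ ≤ 4 * √(Fintype.card ι) * (2 * diam (convexHull ℝ (s : Set (EuclideanSpace ℝ ι)))) := by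
        gcongr
        exact hs.two_zpow_le_two_mul_diam hJ hd hcard
    _ = _ := by ring

end WhitneyScale

section Shapes

lemma centroid_notMem_affineSpan {𝕜 V P : Type*} [DivisionRing 𝕜] [CharZero 𝕜] [AddCommGroup V]
    [Module 𝕜 V] [AddTorsor V P] {s t : Finset P} (hs : AffineIndependent 𝕜 ((↑) : s → P))
    (hts : t ⊂ s) : s.centroid 𝕜 id ∉ affineSpan 𝕜 (t : Set P) := fun hmem => by
  obtain ⟨a, has, hat⟩ := Finset.exists_of_ssubset hts
  have himage : (t : Set P) = ((↑) : s → P) '' ((↑) ⁻¹' (t : Set P)) :=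
    (image_preimage_eq_of_subset (by simpa using hts.subset)).symm
  rw [← Finset.centroid_univ, Finset.centroid_def, himage] at hmem
  have hweight := hs.eq_zero_of_affineCombination_mem_affineSpan
    (Finset.sum_centroidWeights_eq_one_of_nonempty 𝕜 _ ⟨⟨a, has⟩, Finset.mem_univ _⟩) hmem
    (Finset.mem_univ ⟨a, has⟩) hat
  simp [Finset.ne_empty_of_mem has] at hweight

lemma centroid_map_affineEquiv {𝕜 V V₂ P P₂ : Type*} [DivisionRing 𝕜] [CharZero 𝕜]
    [AddCommGroup V] [Module 𝕜 V] [AddTorsor V P] [AddCommGroup V₂] [Module 𝕜 V₂]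
    [AddTorsor V₂ P₂] {s : Finset P} (f : P ≃ᵃ[𝕜] P₂) (hs : s.Nonempty) :
    (s.map f.toEquiv.toEmbedding).centroid 𝕜 id = f (s.centroid 𝕜 id) := by
  rw [Finset.centroid_map, Finset.centroid_def, Finset.centroid_def]
  exact (s.map_affineCombination id _
    (Finset.sum_centroidWeights_eq_one_of_nonempty 𝕜 _ hs) f.toAffineMap).symm

lemma infDist_image_of_dist_eq {X Y : Type*} [PseudoMetricSpace X] [PseudoMetricSpace Y]
    {f : X → Y} {r : ℝ} (hr : 0 ≤ r) (hf : ∀ x y, dist (f x) (f y) = r * dist x y) (x : X)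
    (A : Set X) : infDist (f x) (f '' A) = r * infDist x A := by
  rw [infDist_eq_iInf, infDist_eq_iInf, Real.mul_iInf_of_nonneg hr,
    ← (imageFactorization_surjective (f := f) (s := A)).iInf_comp]
  exact iInf_congr fun y => hf x y

lemma diam_image_of_dist_eq {X Y : Type*} [MetricSpace X] [PseudoMetricSpace Y] {f : X → Y} {r : ℝ}
    (hr : 0 < r) (hf : ∀ x y, dist (f x) (f y) = r * dist x y) (A : Set X) :
    diam (f '' A) = r * diam A := by
  rcases A.subsingleton_or_nontrivial with hA | ⟨x, -, y, -, hxy⟩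
  · rw [diam_subsingleton hA, diam_subsingleton (hA.image f), mul_zero]
  · let g : X →ᵈ Y := Dilation.mkOfDistEq f
      ⟨⟨r, hr.le⟩, fun h => hr.ne' (congrArg NNReal.toReal h), hf⟩
    have hratio : Dilation.ratio g = r :=
      mul_right_cancel₀ (dist_ne_zero.2 hxy) ((Dilation.dist_eq g x y).symm.trans (hf x y))
    rw [← hratio]
    exact Dilation.diam_image g A

variable {m : ℕ} {s t ω : Finset (Euc m)} {r : ℝ} {f : Euc m ≃ᵃ[ℝ] Euc m}

lemma finite_setOf_exists_subset_eq {α β : Type*} (s : Finset α) (p : Finset α → Prop)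
    (g : Finset α → β) : {b | ∃ t ⊆ s, p t ∧ b = g t}.Finite := by
  refine (s.powerset.finite_toSet.image g).subset ?_
  rintro _ ⟨t, hts, -, rfl⟩
  exact mem_image_of_mem g (Finset.mem_powerset.2 hts)

/-- The distances whose extrema over the codimension one faces `t` of `ω` are `faceBetaMin` and
`faceBetaMax`. -/
def barycentreDist (ω t : Finset (Euc m)) : ℝ :=
  infDist (ω.centroid ℝ id) (affineSpan ℝ (t : Set (Euc m)) : Set (Euc m))

lemma barycentreDist_pos (hω : AffineIndependent ℝ ((↑) : ω → Euc m)) (htω : t ⊂ ω)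
    (ht : t.Nonempty) : 0 < barycentreDist ω t :=
  ((AffineSubspace.closed_of_finiteDimensional _).notMem_iff_infDist_pos
    ((affineSpan_nonempty ℝ).2 ht)).1 (centroid_notMem_affineSpan hω htω)

lemma barycentreDist_le_simpDiam (hωs : ω ⊆ s) (htω : t ⊆ ω) (ht : t.Nonempty) :
    barycentreDist ω t ≤ simpDiam m s := by
  obtain ⟨p, hp⟩ := ht
  calc barycentreDist ω t ≤ dist (ω.centroid ℝ id) p :=
        infDist_le_dist_of_mem (subset_affineSpan ℝ _ hp)
    _ ≤ simpDiam m s := dist_le_diam_of_mem (isBounded_convexHull.2 s.finite_toSet.isBounded)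
        (convexHull_mono (Finset.coe_subset.2 hωs) (ω.centroid_mem_convexHull ⟨p, htω hp⟩))
        (subset_convexHull ℝ _ (hωs (htω hp)))

lemma exists_facet_barycentreDist_eq_faceBetaMin (ω : Finset (Euc m)) :
    ∃ t ⊆ ω, t.card = ω.card - 1 ∧ faceBetaMin m ω = barycentreDist ω t := by
  obtain ⟨t, htω, ht⟩ := Finset.exists_subset_card_eq (Nat.sub_le ω.card 1)
  exact Nonempty.csInf_mem (s := {b | ∃ t ⊆ ω, t.card = ω.card - 1 ∧ b = barycentreDist ω t})
    ⟨_, t, htω, ht, rfl⟩ (finite_setOf_exists_subset_eq ω (·.card = ω.card - 1) (barycentreDist ω))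

lemma faceBetaMin_pos (hω : AffineIndependent ℝ ((↑) : ω → Euc m)) (hcard : 2 ≤ ω.card) :
    0 < faceBetaMin m ω := by
  obtain ⟨t, htω, ht, hmin⟩ := exists_facet_barycentreDist_eq_faceBetaMin ω
  rw [hmin]
  exact barycentreDist_pos hω (htω.ssubset_of_ne fun h => by subst h; lia)
    (Finset.card_pos.1 (by lia))

lemma faceBetaMin_le_faceBetaMax (ω : Finset (Euc m)) : faceBetaMin m ω ≤ faceBetaMax m ω := by
  obtain ⟨t, htω, ht, hmin⟩ := exists_facet_barycentreDist_eq_faceBetaMin ω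
  exact le_csSup
    (finite_setOf_exists_subset_eq ω (·.card = ω.card - 1) (barycentreDist ω)).bddAbove
    ⟨t, htω, ht, hmin⟩

lemma faceBetaMax_le_simpDiam (hωs : ω ⊆ s) (hcard : 2 ≤ ω.card) :
    faceBetaMax m ω ≤ simpDiam m s := by
  obtain ⟨t, htω, ht, -⟩ := exists_facet_barycentreDist_eq_faceBetaMin ω
  refine csSup_le ⟨_, t, htω, ht, rfl⟩ ?_
  rintro _ ⟨t, htω, ht, rfl⟩
  exact barycentreDist_le_simpDiam hωs htω (Finset.card_pos.1 (by lia))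

lemma exists_face_faceBetaMin_eq_betaLow (hcard : 2 ≤ s.card) :
    ∃ ω ⊆ s, 2 ≤ ω.card ∧ betaLow m s = faceBetaMin m ω :=
  Nonempty.csInf_mem (s := {b | ∃ ω ⊆ s, 2 ≤ ω.card ∧ b = faceBetaMin m ω})
    ⟨_, s, subset_rfl, hcard, rfl⟩
    (finite_setOf_exists_subset_eq s (2 ≤ ·.card) (faceBetaMin m))

lemma betaLow_pos (hs : AffineIndependent ℝ ((↑) : s → Euc m)) (hcard : 2 ≤ s.card) :
    0 < betaLow m s := by
  obtain ⟨ω, hωs, hω, hmin⟩ := exists_face_faceBetaMin_eq_betaLow hcard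
  rw [hmin]
  exact faceBetaMin_pos (hs.mono (Finset.coe_subset.2 hωs)) hω

lemma betaLow_le_betaHigh (hcard : 2 ≤ s.card) : betaLow m s ≤ betaHigh m s := by
  obtain ⟨ω, hωs, hω, hmin⟩ := exists_face_faceBetaMin_eq_betaLow hcard
  rw [hmin]
  exact (faceBetaMin_le_faceBetaMax ω).trans <|
    le_csSup (finite_setOf_exists_subset_eq s (2 ≤ ·.card) (faceBetaMax m)).bddAbove
      ⟨ω, hωs, hω, rfl⟩

lemma betaHigh_le_simpDiam (hcard : 2 ≤ s.card) : betaHigh m s ≤ simpDiam m s := by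
  refine csSup_le ⟨_, s, subset_rfl, hcard, rfl⟩ ?_
  rintro _ ⟨ω, hωs, hω, rfl⟩
  exact faceBetaMax_le_simpDiam hωs hω

lemma half_lt_simpDiam_div_betaHigh (hs : AffineIndependent ℝ ((↑) : s → Euc m))
    (hcard : 2 ≤ s.card) : 1 / 2 < simpDiam m s / betaHigh m s := by
  have hpos := (betaLow_pos hs hcard).trans_le (betaLow_le_betaHigh hcard)
  rw [lt_div_iff₀ hpos]
  linarith [betaHigh_le_simpDiam hcard]

lemma simpDiam_div_betaHigh_le_simpDiam_div_betaLow
    (hs : AffineIndependent ℝ ((↑) : s → Euc m)) (hcard : 2 ≤ s.card) :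
    simpDiam m s / betaHigh m s ≤ simpDiam m s / betaLow m s :=
  div_le_div_of_nonneg_left diam_nonneg (betaLow_pos hs hcard) (betaLow_le_betaHigh hcard)

lemma sInf_setOf_exists_subset_map {α β : Type*} (e : α ↪ β) {s : Finset α} {p : ℕ → Prop}
    {g : Finset α → ℝ} {g' : Finset β → ℝ} {r : ℝ} (hr : 0 ≤ r)
    (hg : ∀ t ⊆ s, p t.card → g' (t.map e) = r * g t) :
    sInf {b | ∃ t ⊆ s.map e, p t.card ∧ b = g' t} =
      r * sInf {b | ∃ t ⊆ s, p t.card ∧ b = g t} := by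
  rw [← smul_eq_mul, ← Real.sInf_smul_of_nonneg hr, ← image_smul]
  congr 1
  ext b
  constructor
  · rintro ⟨_, hts, hp, rfl⟩
    obtain ⟨t, ht, rfl⟩ := Finset.subset_map_iff.1 hts
    rw [Finset.card_map] at hp
    exact ⟨g t, ⟨t, ht, hp, rfl⟩, (hg t ht hp).symm⟩
  · rintro ⟨_, ⟨t, hts, hp, rfl⟩, rfl⟩
    exact ⟨t.map e, Finset.map_subset_map.2 hts, by rwa [Finset.card_map], (hg t hts hp).symm⟩

lemma barycentreDist_map (hr : 0 < r) (hf : ∀ x y, dist (f x) (f y) = r * dist x y)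
    (hω : ω.Nonempty) (t : Finset (Euc m)) :
    barycentreDist (ω.map f.toEquiv.toEmbedding) (t.map f.toEquiv.toEmbedding) =
      r * barycentreDist ω t := by
  have hspan : (affineSpan ℝ (t.map f.toEquiv.toEmbedding : Set (Euc m)) : Set (Euc m)) =
      f '' affineSpan ℝ (t : Set (Euc m)) := by
    rw [Finset.coe_map]
    exact congrArg SetLike.coe (AffineSubspace.map_span f.toAffineMap (t : Set (Euc m))).symm
  rw [barycentreDist, centroid_map_affineEquiv f hω, hspan, infDist_image_of_dist_eq hr.le hf]
  rfl

lemma faceBetaMin_map (hr : 0 < r) (hf : ∀ x y, dist (f x) (f y) = r * dist x y)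
    (hω : ω.Nonempty) :
    faceBetaMin m (ω.map f.toEquiv.toEmbedding) = r * faceBetaMin m ω := by
  rw [faceBetaMin, Finset.card_map]
  exact sInf_setOf_exists_subset_map (p := (· = ω.card - 1)) _ hr.le
    fun t _ _ => barycentreDist_map hr hf hω t

lemma betaLow_map (hr : 0 < r) (hf : ∀ x y, dist (f x) (f y) = r * dist x y)
    (s : Finset (Euc m)) : betaLow m (s.map f.toEquiv.toEmbedding) = r * betaLow m s :=
  sInf_setOf_exists_subset_map (p := (2 ≤ ·)) _ hr.le
    fun _ _ hω => faceBetaMin_map hr hf (Finset.card_pos.1 (by lia))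

lemma simpDiam_map (hr : 0 < r) (hf : ∀ x y, dist (f x) (f y) = r * dist x y)
    (s : Finset (Euc m)) : simpDiam m (s.map f.toEquiv.toEmbedding) = r * simpDiam m s := by
  rw [simpDiam, simpDiam, convexHull_diam, convexHull_diam, Finset.coe_map]
  exact diam_image_of_dist_eq hr hf _

lemma SimplexEquiv.exists_affineEquiv (h : SimplexEquiv m s t) :
    ∃ (r : ℝ) (f : Euc m ≃ᵃ[ℝ] Euc m), 0 < r ∧ (∀ x y, dist (f x) (f y) = r * dist x y) ∧
      t = s.map f.toEquiv.toEmbedding := by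
  obtain ⟨r, R, b, hr, -, ht⟩ := h
  let f := (R.toLinearEquiv.trans (LinearEquiv.smulOfNeZero ℝ (Euc m) r hr.ne')).toAffineEquiv.trans
    (AffineEquiv.constVAdd ℝ (Euc m) b)
  have hfx : ∀ x, f x = r • R x + b := fun x => add_comm _ _
  refine ⟨r, f, hr, fun x y => ?_, ?_⟩
  · rw [hfx, hfx, dist_add_right, dist_smul₀, Real.norm_of_nonneg hr.le, R.dist_map]
  · rw [← Finset.coe_inj, ht, Finset.coe_map]
    exact image_congr fun x _ => (hfx x).symm

lemma SimplexEquiv.simpDiam_div_betaLow_eq (h : SimplexEquiv m s t) :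
    simpDiam m s / betaLow m s = simpDiam m t / betaLow m t := by
  obtain ⟨r, f, hr, hf, rfl⟩ := h.exists_affineEquiv
  rw [simpDiam_map hr hf, betaLow_map hr hf, mul_div_mul_left _ _ hr.ne']

lemma exists_simpDiam_div_betaLow_lt (P : Finset (Finset (Euc m))) :
    ∃ D > 0, ∀ t ∈ P, ∀ s, SimplexEquiv m s t → simpDiam m s / betaLow m s < D := by
  obtain ⟨M, hM⟩ := (P.image fun t => simpDiam m t / betaLow m t).exists_le
  refine ⟨|M| + 1, by positivity, fun t ht s hst => ?_⟩
  rw [hst.simpDiam_div_betaLow_eq]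
  linarith [hM _ (Finset.mem_image_of_mem _ ht), le_abs_self M]

end Shapes

section FinitelyManyClasses

/-- The integer points of the cube `[-k, k] ^ m`. Up to similarity, they contain the vertices of
every simplex of the Whitney triangulation, for `k = 2`. -/
def integerBox (m k : ℕ) : Finset (Euc m) :=
  open scoped Classical in
  (Fintype.piFinset fun _ => Finset.Icc (-k : ℤ) k).image fun n => WithLp.toLp 2 fun i => (n i : ℝ)

variable {m k : ℕ} {U : Set (Euc m)} {J : Euc m → ℤ} {s : Finset (Euc m)} {x : Euc m}

lemma mem_integerBox_of_forall (h : ∀ i, x i ∈ dyadicGrid 0 ∧ |x i| ≤ k) : x ∈ integerBox m k := by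
  classical
  choose n hn using fun i => mem_dyadicGrid.1 (h i).1
  simp only [zpow_zero, one_mul] at hn
  refine Finset.mem_image.2 ⟨n, Fintype.mem_piFinset.2 fun i => ?_, by ext i; exact hn i⟩
  have hi := (h i).2
  rw [← hn i] at hi
  exact Finset.mem_Icc.2 (abs_le.1 (by rify; exact hi))

lemma simplexEquiv_image_smul_sub [DecidableEq (Euc m)] {r : ℝ} (hr : 0 < r) (d : Euc m)
    (s : Finset (Euc m)) : SimplexEquiv m s (s.image fun x => r • (x - d)) := by
  refine ⟨r, LinearIsometryEquiv.refl ℝ (Euc m), -(r • d), hr, LinearMap.det_id, ?_⟩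
  rw [Finset.coe_image]
  exact image_congr fun x _ => by rw [smul_sub, sub_eq_add_neg, LinearIsometryEquiv.coe_refl, id]

lemma IsFlag.exists_subset_integerBox_simplexEquiv (hJ : IsScaleFunction U J)
    (hgrad : ∀ x ∈ U, ∀ y ∈ closedCell (J x) x, J x - 1 ≤ J y) (hs : IsFlag U J s)
    (hne : s.Nonempty) : ∃ t ∈ (integerBox m 2).powerset, SimplexEquiv m s t := by
  classical
  obtain ⟨d, hd⟩ := hs.exists_isApex hJ hne
  have hdV := hs.isCellVertex d hd.mem
  refine ⟨_, ?_, simplexEquiv_image_smul_sub (two_zpow_pos (2 - J d)) d s⟩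
  refine Finset.mem_powerset.2 (Finset.image_subset_iff.2 fun c hc => ?_)
  refine mem_integerBox_of_forall fun i => ⟨?_, ?_⟩
  · have hcd : c i - d i ∈ dyadicGrid (J d - 2) := by
      have hle := hgrad d hdV.mem c (hd.subset hc)
      exact sub_mem (dyadicGrid_antitone (by lia) ((hs.isCellVertex c hc).apply_mem_dyadicGrid i))
        (dyadicGrid_antitone (by lia) (hdV.apply_mem_dyadicGrid i))
    simpa using two_zpow_mul_mem_dyadicGrid hcd (2 - J d)
  · have habs := abs_sub_le_of_mem_closedCell hdV.cellCenter_eq (hd.subset hc) i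
    calc |((2 : ℝ) ^ (2 - J d) • (c - d)) i| = 2 ^ (2 - J d) * |c i - d i| := by
          simp [abs_mul]
      _ ≤ 2 ^ (2 - J d) * (2 ^ J d / 2) := by gcongr
      _ = (2 : ℕ) := by
          rw [zpow_sub₀ two_ne_zero]
          field_simp
          norm_num

end FinitelyManyClasses

section WhitneyTriangulation

variable {m : ℕ} {A Z U : Set (Euc m)} {J : Euc m → ℤ} {s : Finset (Euc m)} {x : Euc m}

lemma le_setDist {a : ℝ} (hA : A.Nonempty) (hZ : Z.Nonempty) (h : ∀ x ∈ A, a ≤ infDist x Z) :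
    a ≤ setDist m A Z := by
  refine le_csInf (hA.image2 hZ) ?_
  rintro _ ⟨x, hx, z, hz, rfl⟩
  exact (h x hx).trans (infDist_le_dist_of_mem hz)

lemma setDist_le_infDist (hZ : Z.Nonempty) (hx : x ∈ A) : setDist m A Z ≤ infDist x Z := by
  refine (le_infDist hZ).2 fun z hz => csInf_le ⟨0, ?_⟩ (mem_image2_of_mem hx hz)
  rintro _ ⟨x, -, z, -, rfl⟩
  exact dist_nonneg

lemma card_le_of_mem_faces (K : Geometry.SimplicialComplex ℝ (Euc m)) (hs : s ∈ K.faces) :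
    s.card ≤ m + 1 := by
  have hcard := (K.indep hs).card_le_finrank_succ
  have hrank := Submodule.finrank_le (vectorSpan ℝ (range ((↑) : s → Euc m)))
  rw [finrank_euclideanSpace_fin] at hrank
  rw [Fintype.card_coe] at hcard
  lia

lemma skel_dyadicComplex (hJ : IsScaleFunction U J) : skel m (dyadicComplex hJ) m = U := by
  have hfaces : {s ∈ (dyadicComplex hJ).faces | s.card = m + 1} =
      {s | IsFlag U J s ∧ s.card = Fintype.card (Fin m) + 1} := by
    ext s
    rw [Fintype.card_fin]
    exact ⟨fun h => ⟨(mem_faces_dyadicComplex.1 h.1).1, h.2⟩, fun h =>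
      ⟨mem_faces_dyadicComplex.2 ⟨h.1, Finset.card_pos.1 (h.2 ▸ m.succ_pos)⟩, h.2⟩⟩
  rw [skel, hfaces, iUnion_convexHull_isFlag hJ]

lemma simpDiam_le_setDist [Nonempty (Fin m)] (hZ : IsClosed Z) (hne : Z.Nonempty)
    (hs : IsFlag Zᶜ (whitneyScale Z) s) (hsne : s.Nonempty) :
    simpDiam m s ≤ setDist m (convexHull ℝ (s : Set (Euc m))) Z :=
  le_setDist (convexHull_nonempty_iff.2 hsne) hne fun _ hx => hs.diam_le_infDist hZ hne hx

lemma setDist_le_mul_simpDiam [Nonempty (Fin m)] (hZ : IsClosed Z) (hne : Z.Nonempty)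
    (hs : IsFlag Zᶜ (whitneyScale Z) s) (hcard : 2 ≤ s.card) :
    setDist m (convexHull ℝ (s : Set (Euc m))) Z ≤ 12 * √m * simpDiam m s := by
  obtain ⟨x, hx, hxZ⟩ := hs.exists_infDist_le_diam hZ hne hcard
  rw [Fintype.card_fin] at hxZ
  have hnonneg : 0 ≤ √m * simpDiam m s := mul_nonneg (Real.sqrt_nonneg _) diam_nonneg
  calc setDist m (convexHull ℝ (s : Set (Euc m))) Z ≤ 8 * √m * simpDiam m s :=
        (setDist_le_infDist hne hx).trans hxZ
    _ ≤ 12 * √m * simpDiam m s := by linarith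

lemma whitneyConclusions_dyadicComplex [Nonempty (Fin m)] (hZ : IsClosed Z) (hne : Z.Nonempty)
    {D : ℝ} (hD : ∀ s, IsFlag Zᶜ (whitneyScale Z) s → s.Nonempty →
      simpDiam m s / betaLow m s < D) :
    WhitneyConclusions m (1 / 2) D Z (dyadicComplex (isScaleFunction_whitneyScale hZ hne)) := by
  refine ⟨fun s => card_le_of_mem_faces _, skel_dyadicComplex _, fun s hs hcard => ?_⟩
  obtain ⟨hflag, hsne⟩ := mem_faces_dyadicComplex.1 hs
  have hind := (dyadicComplex (isScaleFunction_whitneyScale hZ hne)).indep hs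
  have hcard : 2 ≤ s.card := by
    have hm := Fin.pos_iff_nonempty.2 ‹Nonempty (Fin m)›
    lia
  exact ⟨simpDiam_le_setDist hZ hne hflag hsne, setDist_le_mul_simpDiam hZ hne hflag hcard,
    half_lt_simpDiam_div_betaHigh hind hcard,
    simpDiam_div_betaHigh_le_simpDiam_div_betaLow hind hcard, hD s hflag hsne⟩

end WhitneyTriangulation

/-- **Lemma (Whitney triangulation, with finitely many similarity classes).**
For every `m ≥ 1` there are `D₁, D₂ > 0` and an integer `N ≥ 1`, depending only on `m`,
such that every nonempty proper closed subset `Z ⊊ ℝ^m` admits an `m`-dimensional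
simplicial complex `Σ` with `Σ^{(m)} = ℝ^m ∖ Z` satisfying the Whitney triangulation
conclusions and whose simplices fall into at most `N` equivalence classes under
rotation–translation–dilation equivalence. -/
theorem whitney_triangulation_finitely_many_classes (m : ℕ) (hm : 1 ≤ m) :
    ∃ D₁ D₂ : ℝ, ∃ N : ℕ, 0 < D₁ ∧ 0 < D₂ ∧ 1 ≤ N ∧
      ∀ Z : Set (Euc m), IsClosed Z → Z.Nonempty → Z ≠ Set.univ →
        ∃ K : Geometry.SimplicialComplex ℝ (Euc m),
          WhitneyConclusions m D₁ D₂ Z K ∧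
          ∃ reps : Fin N → Finset (Euc m),
            ∀ s ∈ K.faces, ∃ i : Fin N, SimplexEquiv m s (reps i) := by
  have : Nonempty (Fin m) := Fin.pos_iff_nonempty.1 hm
  let P := (integerBox m 2).powerset
  obtain ⟨D₂, hD₂, hlt⟩ := exists_simpDiam_div_betaLow_lt P
  refine ⟨1 / 2, D₂, P.card, by norm_num, hD₂, Finset.card_pos.2 (Finset.powerset_nonempty _),
    fun Z hZ hne _ => ?_⟩
  have hJ := isScaleFunction_whitneyScale hZ hne
  have hclass : ∀ s, IsFlag Zᶜ (whitneyScale Z) s → s.Nonempty → ∃ t ∈ P, SimplexEquiv m s t :=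
    fun s => IsFlag.exists_subset_integerBox_simplexEquiv hJ
      fun x hx y => whitneyScale_sub_one_le hZ hne hx
  refine ⟨dyadicComplex hJ, whitneyConclusions_dyadicComplex hZ hne fun s hs hsne => ?_,
    fun i => (P.equivFin.symm i).1, fun s hs => ?_⟩
  · obtain ⟨t, ht, hst⟩ := hclass s hs hsne
    exact hlt t ht s hst
  · obtain ⟨hflag, hsne⟩ := mem_faces_dyadicComplex.1 hs
    obtain ⟨t, ht, hst⟩ := hclass s hflag hsne
    exact ⟨P.equivFin ⟨t, ht⟩, by simpa using hst⟩

end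
end
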